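/- arXiv:2407.20217 — 2 statements merged into one kernel-verified Lean document; each statement's English description precedes it below -/
import Mathlib

section
/- Let G ∈ G_{n,n+2} with n ≥ 1. If G is an imbalanced weak subdivision of K₄, then there exists another weak K₄-subdivision H ∈ G_{n,n+2} such that d_2(H) < d_2(G) and d_3(H) < d_3(G). Hence an imbalanced weak K₄-subdivision is not p-optimal for any p ∈ (0,1). -/
open Classical Finset

noncomputable section

/-- A finite multigraph: edges carry two (possibly equal) endpoints. -/
structure Multigraph where
  V : Type
  E : Type
  [fintV : Fintype V]
  [fintE : Fintype E]
  src : E → V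
  tgt : E → V

attribute [instance] Multigraph.fintV Multigraph.fintE

namespace Multigraph

variable (G : Multigraph)

/-- Number of vertices. -/
def nV : ℕ := Fintype.card G.V

/-- Number of edges (with multiplicity). -/
def nE : ℕ := Fintype.card G.E

/-- One step along an edge belonging to the edge set `S`. -/
def stepOn (S : Finset G.E) (u v : G.V) : Prop :=
  ∃ e ∈ S, (G.src e = u ∧ G.tgt e = v) ∨ (G.src e = v ∧ G.tgt e = u)

/-- The spanning subgraph with edge set `S` is connected. -/
def ConnOn (S : Finset G.E) : Prop :=
  ∀ u v : G.V, Relation.ReflTransGen (G.stepOn S) u v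

/-- `G` is connected. -/
def Connected : Prop := G.ConnOn Finset.univ

/-- The edge set `F` disconnects `G` (i.e. is a disconnection). -/
def Disconnects (F : Finset G.E) : Prop := ¬ G.ConnOn (Finset.univ \ F)

/-- `d i G`: the number of `i`-disconnections of `G`. -/
def d (i : ℕ) : ℕ :=
  ((Finset.univ : Finset (Finset G.E)).filter fun F => F.card = i ∧ G.Disconnects F).card

/-- The all-terminal reliability `R(G,p)`: each edge is independently retained with
probability `p`; this is the probability that the retained spanning subgraph is connected. -/
def rel (p : ℝ) : ℝ :=
  ∑ S : Finset G.E, if G.ConnOn S then p ^ S.card * (1 - p) ^ (G.nE - S.card) else 0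

/-- `e` is a bridge. -/
def IsBridge (e : G.E) : Prop := G.Disconnects {e}

def Bridgeless : Prop := ∀ e : G.E, ¬ G.IsBridge e

/-- The number of spanning trees of `G` (connected spanning subgraphs with `nV - 1` edges). -/
def treeCount : ℕ :=
  ((Finset.univ : Finset (Finset G.E)).filter fun S => S.card + 1 = G.nV ∧ G.ConnOn S).card

/-- The edge-connectivity: the least size of a disconnecting set of edges. -/
def edgeConnectivity : ℕ :=
  sInf {i : ℕ | ∃ F : Finset G.E, F.card = i ∧ G.Disconnects F}

/-- Degree of a vertex (a loop counts twice). -/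
def deg (v : G.V) : ℕ :=
  (Finset.univ.filter fun e => G.src e = v).card +
    (Finset.univ.filter fun e => G.tgt e = v).card

/-- The edges crossing the vertex set `A`. -/
def cutEdges (A : Finset G.V) : Finset G.E :=
  Finset.univ.filter fun e =>
    (G.src e ∈ A ∧ G.tgt e ∉ A) ∨ (G.src e ∉ A ∧ G.tgt e ∈ A)

/-- `F` is a cut: the set of edges crossing a nontrivial bipartition of the vertices. -/
def IsCut (F : Finset G.E) : Prop :=
  ∃ A : Finset G.V, A.Nonempty ∧ A ≠ Finset.univ ∧ F = G.cutEdges A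

/-- `F` is a bond: a minimal cut. -/
def IsBond (F : Finset G.E) : Prop :=
  G.IsCut F ∧ ∀ F' ⊆ F, G.IsCut F' → F' = F

/-- Number of `s`-bonds of `G`. -/
def bondCount (s : ℕ) : ℕ :=
  ((Finset.univ : Finset (Finset G.E)).filter fun F => F.card = s ∧ G.IsBond F).card

/-- Adjacency of vertices. -/
def Adj (u v : G.V) : Prop :=
  ∃ e : G.E, (G.src e = u ∧ G.tgt e = v) ∨ (G.src e = v ∧ G.tgt e = u)

/-- `G` is simple: no loops and no parallel edges. -/
def IsSimple : Prop :=
  (∀ e : G.E, G.src e ≠ G.tgt e) ∧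
    ∀ e f : G.E,
      ((G.src e = G.src f ∧ G.tgt e = G.tgt f) ∨ (G.src e = G.tgt f ∧ G.tgt e = G.src f)) →
        e = f

end Multigraph

/-- `G ∈ 𝒢_{n,m}`: connected with `n` vertices and `m` edges. -/
def memG (G : Multigraph) (n m : ℕ) : Prop :=
  G.nV = n ∧ G.nE = m ∧ G.Connected

/-- Isomorphism of multigraphs. -/
structure MGIso (G H : Multigraph) where
  vMap : G.V ≃ H.V
  eMap : G.E ≃ H.E
  ends_eq : ∀ e : G.E,
    (H.src (eMap e) = vMap (G.src e) ∧ H.tgt (eMap e) = vMap (G.tgt e)) ∨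
    (H.src (eMap e) = vMap (G.tgt e) ∧ H.tgt (eMap e) = vMap (G.src e))

def IsIso (G H : Multigraph) : Prop := Nonempty (MGIso G H)

/-- `G` is `p`-optimal in `𝒢_{n,m}`. -/
def pOptimal (G : Multigraph) (n m : ℕ) (p : ℝ) : Prop :=
  memG G n m ∧ ∀ H : Multigraph, memG H n m → H.rel p ≤ G.rel p

/-- `G` is uniquely optimal in `𝒢_{n,m}`: strictly more reliable than every
non-isomorphic member, for every `p ∈ (0,1)`. -/
def UniquelyOptimal (G : Multigraph) (n m : ℕ) : Prop :=
  memG G n m ∧ ∀ H : Multigraph, memG H n m → ¬ IsIso G H →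
    ∀ p : ℝ, 0 < p → p < 1 → H.rel p < G.rel p

noncomputable instance quotFintype {α : Type} [Fintype α] {r : α → α → Prop} :
    Fintype (Quot r) :=
  letI := Classical.decEq (Quot r)
  Fintype.ofSurjective (Quot.mk r) fun q => Quot.exists_rep q

/-- Identification of the endpoints of zero-weight edges. -/
def zeroRel (D : Multigraph) (w : D.E → ℕ) : D.V → D.V → Prop :=
  fun u v => ∃ e : D.E, w e = 0 ∧ D.src e = u ∧ D.tgt e = v

/-- The `j`-th node along the chain replacing the edge `e` (whose chain has `w e` edges). -/
def chainNode (D : Multigraph) (w : D.E → ℕ) (e : D.E) (j : ℕ) :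
    Quot (zeroRel D w) ⊕ (Σ f : D.E, Fin (w f - 1)) :=
  if h : 0 < j ∧ j < w e then Sum.inr ⟨e, ⟨j - 1, by omega⟩⟩
  else if j = 0 then Sum.inl (Quot.mk _ (D.src e))
  else Sum.inl (Quot.mk _ (D.tgt e))

/-- The weak subdivision of `D` determined by the chain lengths `w`: each edge `e` is
replaced by a chain with `w e` edges; zero-weight edges are contracted. -/
def subdivide (D : Multigraph) (w : D.E → ℕ) : Multigraph where
  V := Quot (zeroRel D w) ⊕ (Σ f : D.E, Fin (w f - 1))
  E := Σ f : D.E, Fin (w f)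
  src f := chainNode D w f.1 f.2.val
  tgt f := chainNode D w f.1 (f.2.val + 1)

/-- The zero-weight edges contain no cycle (no "zero cycle"): they form a forest. -/
def ZeroAcyclic (D : Multigraph) (w : D.E → ℕ) : Prop :=
  Fintype.card (Quot (zeroRel D w)) +
      (Finset.univ.filter fun e : D.E => w e = 0).card = Fintype.card D.V

/-- `G` is a weak subdivision of `D` with chain lengths `w`. -/
def IsWeakSubdivision (G D : Multigraph) (w : D.E → ℕ) : Prop :=
  ZeroAcyclic D w ∧ IsIso G (subdivide D w)

/-- `D` is a weak distillation of `G`. -/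
def IsWeakDistillation (D G : Multigraph) : Prop :=
  ∃ w : D.E → ℕ, IsWeakSubdivision G D w

/-- The chain lengths differ pairwise by at most one. -/
def BalancedWeights {E : Type} (w : E → ℕ) : Prop := ∀ e f : E, w e ≤ w f + 1

/-- `D ∈ 𝒟_k`: connected, cubic, 3-edge-connected, of exceedance `k`. -/
def memDk (k : ℕ) (D : Multigraph) : Prop :=
  D.Connected ∧ (∀ v : D.V, D.deg v = 3) ∧
    (∀ F : Finset D.E, D.Disconnects F → 3 ≤ F.card) ∧ D.nE = D.nV + k

/-- Identification of the two endpoints of the edge `e`. -/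
def contractRel (G : Multigraph) (e : G.E) : G.V → G.V → Prop :=
  fun u v => u = G.src e ∧ v = G.tgt e

/-- Contraction of the edge `e`. -/
def Multigraph.contract (G : Multigraph) (e : G.E) : Multigraph :=
  letI := Classical.decEq G.E
  { V := Quot (contractRel G e)
    E := {f : G.E // f ≠ e}
    src := fun f => Quot.mk _ (G.src f.1)
    tgt := fun f => Quot.mk _ (G.tgt f.1) }

/-- `G'` is obtained from `G` by shifting an edge: in an intermediate graph `H`
(the expansion of `G` at a vertex by the new edge `e'`), the edges `e, e'` form a
2-bond; contracting `e'` gives back `G`, while contracting `e` gives `G'`. -/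
def IsShiftOf (G G' : Multigraph) : Prop :=
  ∃ (H : Multigraph) (e e' : H.E), e ≠ e' ∧
    H.src e ≠ H.tgt e ∧ H.src e' ≠ H.tgt e' ∧
    H.IsBond {e, e'} ∧
    IsIso (H.contract e') G ∧ IsIso (H.contract e) G'

/-- Equivalence of graphs: repeated edge shifting. -/
def EquivalentGraphs (G G' : Multigraph) : Prop :=
  Relation.ReflTransGen IsShiftOf G G'

/-- `G'` is obtained from `G` by moving the (non-loop) edge `e`: contracting `e` and
expanding a new edge, identified with `e` via `φ`, at an arbitrary vertex.
Equivalently, `G/e` and `G'/φ e` agree, compatibly with the edge identification `φ`. -/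
def MovedEdge (G G' : Multigraph) (φ : G.E ≃ G'.E) (e : G.E) : Prop :=
  G.src e ≠ G.tgt e ∧ G'.src (φ e) ≠ G'.tgt (φ e) ∧
  ∃ ψ : Quot (contractRel G e) ≃ Quot (contractRel G' (φ e)),
    ∀ f : G.E, f ≠ e →
      ((ψ (Quot.mk _ (G.src f)) = Quot.mk _ (G'.src (φ f)) ∧
        ψ (Quot.mk _ (G.tgt f)) = Quot.mk _ (G'.tgt (φ f))) ∨
       (ψ (Quot.mk _ (G.src f)) = Quot.mk _ (G'.tgt (φ f)) ∧
        ψ (Quot.mk _ (G.tgt f)) = Quot.mk _ (G'.src (φ f))))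

/-- Move one edge from the chain `a` to the chain `b`. -/
def moveWeight {E : Type} (w : E → ℕ) (a b : E) : E → ℕ :=
  fun g => if g = b then w b + 1 else if g = a then w a - 1 else w g

/-- The chains of maximal length. -/
def maxChains (D : Multigraph) (w : D.E → ℕ) : Finset D.E :=
  Finset.univ.filter fun e => ∀ f : D.E, w f ≤ w e

/-- The chains of minimal length. -/
def minChains (D : Multigraph) (w : D.E → ℕ) : Finset D.E :=
  Finset.univ.filter fun e => ∀ f : D.E, w e ≤ w f

/-- Degree of `v` within the edge set `S`. -/
def degIn (D : Multigraph) (S : Finset D.E) (v : D.V) : ℕ :=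
  (S.filter fun e => D.src e = v).card + (S.filter fun e => D.tgt e = v).card

/-- `S` is a matching (pairwise non-adjacent edges). -/
def IsMatchingIn (D : Multigraph) (S : Finset D.E) : Prop := ∀ v : D.V, degIn D S v ≤ 1

/-- `S` is a path with three edges. -/
def IsPath3In (D : Multigraph) (S : Finset D.E) : Prop :=
  S.card = 3 ∧ (∀ v : D.V, degIn D S v ≤ 2) ∧
    (Finset.univ.filter fun v : D.V => degIn D S v = 1).card = 2

/-- `S` is the disjoint union of a path with three edges and a single edge. -/
def IsPath3PlusEdgeIn (D : Multigraph) (S : Finset D.E) : Prop :=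
  S.card = 4 ∧ (∀ v : D.V, degIn D S v ≤ 2) ∧
    (Finset.univ.filter fun v : D.V => degIn D S v = 1).card = 4 ∧
    ∃ e ∈ S, degIn D S (D.src e) = 2 ∧ degIn D S (D.tgt e) = 2

/-- `S` is the disjoint union of two paths with two edges each. -/
def IsTwoPlusTwoIn (D : Multigraph) (S : Finset D.E) : Prop :=
  S.card = 4 ∧ (∀ v : D.V, degIn D S v ≤ 2) ∧
    (Finset.univ.filter fun v : D.V => degIn D S v = 1).card = 4 ∧
    ∀ e ∈ S, degIn D S (D.src e) = 1 ∨ degIn D S (D.tgt e) = 1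

/-- Two edges sharing a vertex. -/
def AdjEdges (D : Multigraph) (a b : D.E) : Prop :=
  ∃ v : D.V, (D.src a = v ∨ D.tgt a = v) ∧ (D.src b = v ∨ D.tgt b = v)

/-- The number of incidences of edges of weight `c` at the vertex `u`. -/
def incCount (D : Multigraph) (w : D.E → ℕ) (u : D.V) (c : ℕ) : ℕ :=
  (Finset.univ.filter fun e : D.E => D.src e = u ∧ w e = c).card +
    (Finset.univ.filter fun e : D.E => D.tgt e = u ∧ w e = c).card

/-- The `π^v`-value of the vertex `u`: the number of incident edges of weight `q + 1`
minus the number of incident edges of weight `q - 1`. -/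
def piV (D : Multigraph) (w : D.E → ℕ) (q : ℕ) (u : D.V) : ℤ :=
  (incCount D w u (q + 1) : ℤ) -
    (if q = 0 then 0 else (incCount D w u (q - 1) : ℤ))

/-- The `π^v`-values are balanced: pairwise differences at most one. -/
def BalancedPiV (D : Multigraph) (w : D.E → ℕ) (q : ℕ) : Prop :=
  ∀ u v : D.V, piV D w q u ≤ piV D w q v + 1

/-- The standard weight `q`, where `m = 3kq + r` with `-3k/2 < r ≤ 3k/2`. -/
def stdWeight (m k : ℕ) : ℕ := (2 * m + 3 * k - 1) / (6 * k)

/-- `w` is a balanced weighting of `D` of total size `m` (the implied weak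
subdivision is the generic member of `ℬ_m(D)`). -/
def IsBalancedWeighting (D : Multigraph) (w : D.E → ℕ) (m : ℕ) : Prop :=
  (∑ e : D.E, w e) = m ∧ BalancedWeights w ∧ ZeroAcyclic D w

/-- Every 3-bond of `D` is trivial (consists of the three edges at a single vertex). -/
def OnlyTrivialThreeBonds (D : Multigraph) : Prop :=
  ∀ F : Finset D.E, D.IsBond F → F.card = 3 →
    ∃ u : D.V, F = Finset.univ.filter fun e => D.src e = u ∨ D.tgt e = u

/-- The 3-dipole: two vertices joined by three parallel edges. -/
def dipole3 : Multigraph where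
  V := Fin 2
  E := Fin 3
  src _ := 0
  tgt _ := 1

/-- The complete graph `K₄`. -/
def K4 : Multigraph where
  V := Fin 4
  E := {p : Fin 4 × Fin 4 // p.1 < p.2}
  src p := p.1.1
  tgt p := p.1.2

/-- The complete bipartite graph `K_{3,3}`. -/
def K33 : Multigraph where
  V := Fin 3 ⊕ Fin 3
  E := Fin 3 × Fin 3
  src p := Sum.inl p.1
  tgt p := Sum.inr p.2

/-- The triangular prism `Π₃`; the edges `Sum.inr i` are the rungs. -/
def prism : Multigraph where
  V := Fin 3 × Bool
  E := (Fin 3 × Bool) ⊕ Fin 3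
  src := fun e => match e with
    | Sum.inl (i, b) => (i, b)
    | Sum.inr i => (i, false)
  tgt := fun e => match e with
    | Sum.inl (i, b) => (i + 1, b)
    | Sum.inr i => (i, true)

/-- The Wagner graph (the 4-Möbius ladder): the edges `Sum.inl i` are the rails
(the 8-cycle) and the edges `Sum.inr j` are the rungs. -/
def wagner : Multigraph where
  V := Fin 8
  E := Fin 8 ⊕ Fin 4
  src := fun e => match e with
    | Sum.inl i => i
    | Sum.inr j => ⟨j.val, by omega⟩
  tgt := fun e => match e with
    | Sum.inl i => i + 1
    | Sum.inr j => ⟨j.val + 4, by omega⟩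

/-- The Petersen graph. -/
def petersen : Multigraph where
  V := Fin 5 × Bool
  E := Fin 5 ⊕ Fin 5 ⊕ Fin 5
  src := fun e => match e with
    | Sum.inl i => (i, false)
    | Sum.inr (Sum.inl i) => (i, false)
    | Sum.inr (Sum.inr i) => (i, true)
  tgt := fun e => match e with
    | Sum.inl i => (i + 1, false)
    | Sum.inr (Sum.inl i) => (i, true)
    | Sum.inr (Sum.inr i) => (i + 2, true)

namespace K4aux
open Multigraph

lemma conn_iff (G : Multigraph) (S : Finset G.E) :
    G.ConnOn S ↔ ∀ A : G.V → Prop, (∀ e ∈ S, (A (G.src e) ↔ A (G.tgt e))) → ∀ u v, A u → A v := by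
  constructor
  · intro h A hA u v hu
    have := h u v
    induction this with
    | refl => exact hu
    | tail _ hs ih =>
      obtain ⟨e, he, ⟨rfl, rfl⟩ | ⟨rfl, rfl⟩⟩ := hs
      · exact (hA e he).1 ih
      · exact (hA e he).2 ih
  · intro h u v
    refine h (fun x => Relation.ReflTransGen (G.stepOn S) u x) ?_ u v Relation.ReflTransGen.refl
    intro e he
    exact ⟨fun hh => hh.tail ⟨e, he, Or.inl ⟨rfl, rfl⟩⟩, fun hh => hh.tail ⟨e, he, Or.inr ⟨rfl, rfl⟩⟩⟩

/-- number of `i`-sets whose removal keeps the graph connected -/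
def c (G : Multigraph) (i : ℕ) : ℕ :=
  ((Finset.univ : Finset (Finset G.E)).filter fun F => F.card = i ∧ G.ConnOn (Finset.univ \ F)).card

lemma d_add_c (G : Multigraph) (i : ℕ) : G.d i + c G i = (G.nE).choose i := by
  have h : (Finset.univ : Finset (Finset G.E)).filter (fun F => F.card = i) = Finset.powersetCard i Finset.univ := by
    ext F; simp [Finset.mem_powersetCard]
  have h2 : (Finset.powersetCard i (Finset.univ : Finset G.E)).card = (G.nE).choose i := by
    rw [Finset.card_powersetCard]; rfl
  rw [← h2, ← h, Multigraph.d, c, ← Finset.card_union_of_disjoint]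
  · congr 1
    ext F
    simp only [Finset.mem_union, Finset.mem_filter, Finset.mem_univ, true_and]
    unfold Multigraph.Disconnects
    tauto
  · rw [Finset.disjoint_left]
    intro F h1 h2
    exact (Finset.mem_filter.1 h1).2.2 (Finset.mem_filter.1 h2).2.2

lemma rel_eq (G : Multigraph) (p : ℝ) :
    G.rel p = ∑ i ∈ Finset.range (G.nE + 1), (c G i : ℝ) * (p ^ (G.nE - i) * (1 - p) ^ i) := by
  have e1 : G.rel p = ∑ F : Finset G.E, if G.ConnOn (Finset.univ \ F) then
      p ^ (G.nE - F.card) * (1 - p) ^ F.card else 0 := by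
    unfold Multigraph.rel
    refine Finset.sum_nbij' (fun S => Finset.univ \ S) (fun S => Finset.univ \ S) ?_ ?_ ?_ ?_ ?_
    · simp
    · simp
    · intro S _; simp
    · intro S _; simp
    · intro S _
      have : (Finset.univ \ S).card = G.nE - S.card := by
        rw [Finset.card_univ_sdiff]; rfl
      have h2 : S.card ≤ G.nE := Finset.card_le_univ S
      rw [this]
      have h3 : G.nE - (G.nE - S.card) = S.card := by omega
      have h4 : Finset.univ \ (Finset.univ \ S) = S := by simp
      rw [h3, h4]
  rw [e1, ← Finset.sum_fiberwise_of_maps_to (t := Finset.range (G.nE + 1)) (g := fun F => F.card)]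
  · refine Finset.sum_congr rfl fun i _ => ?_
    rw [← Finset.sum_filter, Finset.filter_filter, c, ← nsmul_eq_mul, ← Finset.sum_const]
    refine Finset.sum_congr rfl ?_
    intro F hF
    simp only [Finset.mem_filter] at hF
    rw [hF.2.1]
  · intro F _
    have : F.card ≤ G.nE := Finset.card_le_univ F
    simp only [Finset.mem_range]; omega

lemma conn_iso_aux {G H : Multigraph} (f : MGIso G H) (F : Finset G.E)
    : H.ConnOn (Finset.univ \ F.map f.eMap.toEmbedding) ↔ G.ConnOn (Finset.univ \ F) := by
  rw [conn_iff, conn_iff]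
  constructor
  · intro h A hA u v hu
    have := h (fun x => A (f.vMap.symm x)) ?_ (f.vMap u) (f.vMap v) (by simpa using hu)
    · simpa using this
    · intro e he
      obtain ⟨e, rfl⟩ := f.eMap.surjective e
      have he' : e ∈ Finset.univ \ F := by simpa using he
      have := hA e he'
      rcases f.ends_eq e with ⟨h1, h2⟩ | ⟨h1, h2⟩ <;> rw [h1, h2] <;> simp [this]
  · intro h A hA u v hu
    have := h (fun x => A (f.vMap x)) ?_ (f.vMap.symm u) (f.vMap.symm v) (by simpa using hu)
    · simpa using this
    · intro e he
      have he' : f.eMap e ∈ Finset.univ \ F.map f.eMap.toEmbedding := by simpa using he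
      have := hA _ he'
      rcases f.ends_eq e with ⟨h1, h2⟩ | ⟨h1, h2⟩ <;> rw [h1, h2] at this <;> simp [this]

lemma c_iso {G H : Multigraph} (f : MGIso G H) (i : ℕ) : c G i = c H i := by
  unfold c
  refine Finset.card_bij (fun F _ => F.map f.eMap.toEmbedding) ?_ ?_ ?_
  · intro F hF
    simp only [Finset.mem_filter, Finset.mem_univ, true_and, Finset.card_map] at hF ⊢
    exact ⟨hF.1, (conn_iso_aux f F).2 hF.2⟩
  · intro F _ F' _ h
    exact Finset.map_injective _ h
  · intro F hF
    refine ⟨F.map f.eMap.symm.toEmbedding, ?_, ?_⟩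
    · have hh : F = (F.map f.eMap.symm.toEmbedding).map f.eMap.toEmbedding := by
        ext x; simp
      simp only [Finset.mem_filter, Finset.mem_univ, true_and, Finset.card_map] at hF ⊢
      exact ⟨hF.1, (conn_iso_aux f _).1 (hh ▸ hF.2)⟩
    · ext x; simp

lemma chainNode_zero (D : Multigraph) (w : D.E → ℕ) (e : D.E) :
    chainNode D w e 0 = Sum.inl (Quot.mk _ (D.src e)) := by
  simp [chainNode]

lemma chainNode_end (D : Multigraph) (w : D.E → ℕ) (e : D.E) :
    chainNode D w e (w e) = Sum.inl (Quot.mk _ (D.tgt e)) := by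
  by_cases h : w e = 0
  · rw [h, chainNode_zero]
    exact congrArg _ (Quot.sound ⟨e, h, rfl, rfl⟩)
  · simp [chainNode, h]

lemma chainNode_mid (D : Multigraph) (w : D.E → ℕ) (e : D.E) (i : Fin (w e - 1)) :
    chainNode D w e (i.val + 1) = Sum.inr ⟨e, i⟩ := by
  have : i.val + 1 < w e := by omega
  simp [chainNode, this]

/-- the chain of an edge -/
def fs (D : Multigraph) (w : D.E → ℕ) (x : (subdivide D w).E) : D.E := Sigma.fst x

/-- an edge of a chain -/
def mkE (D : Multigraph) (w : D.E → ℕ) (e : D.E) (k : Fin (w e)) : (subdivide D w).E := Sigma.mk e k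

@[simp] lemma fs_mkE (D : Multigraph) (w : D.E → ℕ) (e : D.E) (k : Fin (w e)) : fs D w (mkE D w e k) = e := rfl

lemma mkE_inj (D : Multigraph) (w : D.E → ℕ) (e : D.E) (k k' : Fin (w e)) (h : mkE D w e k = mkE D w e k') : k = k' := by
  unfold mkE at h
  exact eq_of_heq (Sigma.mk.inj h).2

lemma mkE_rep (D : Multigraph) (w : D.E → ℕ) (x : (subdivide D w).E) : ∃ k, x = mkE D w (fs D w x) k :=
  ⟨Sigma.snd x, rfl⟩

/-- the relevant characterization -/
lemma conn_subdivide (D : Multigraph) (w : D.E → ℕ) (F : Finset (subdivide D w).E) :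
    (subdivide D w).ConnOn (Finset.univ \ F) ↔
      (Set.InjOn (fs D w) (F : Set (subdivide D w).E)) ∧
        D.ConnOn (Finset.univ \ Finset.image (fs D w) F) := by
  constructor
  · intro h
    rw [conn_iff] at h
    constructor
    · -- at most one
      have key : ∀ (e : D.E) (k1 k2 : Fin (w e)), mkE D w e k1 ∈ F →
          mkE D w e k2 ∈ F → ¬ k1 < k2 := by
        intro e k1 k2 h1 h2 hlt
        let A : Quot (zeroRel D w) ⊕ (Σ f : D.E, Fin (w f - 1)) → Prop :=
          Sum.elim (fun _ => False) (fun x => x.1 = e ∧ k1.val < x.2.val + 1 ∧ x.2.val + 1 ≤ k2.val)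
        have hA : ∀ f j, j ≤ w f → (A (chainNode D w f j) ↔ (f = e ∧ k1.val < j ∧ j ≤ k2.val)) := by
          intro f j hj
          rcases Nat.eq_zero_or_pos j with rfl | hpos
          · rw [chainNode_zero]; simp [A]
          rcases hj.lt_or_eq with hlt' | rfl
          · obtain ⟨j, rfl⟩ := Nat.exists_eq_succ_of_ne_zero hpos.ne'
            have := chainNode_mid D w f ⟨j, by omega⟩
            simp only [Nat.succ_eq_add_one] at *
            rw [this]
            exact Iff.rfl
          · rw [chainNode_end]
            simp only [A, Sum.elim_inl, false_iff]
            rintro ⟨rfl, _, h⟩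
            omega
        have := h A ?_ (chainNode D w e k2.val) (chainNode D w e 0) ?_
        · rw [chainNode_zero] at this; exact this
        · rintro ⟨f, k⟩ he
          show A (chainNode D w f k.val) ↔ A (chainNode D w f (k.val+1))
          rw [hA f k.val (by omega), hA f (k.val+1) (by omega)]
          have hn : mkE D w f k ∉ F := (Finset.mem_sdiff.1 he).2
          refine and_congr_right ?_
          rintro rfl
          have n1 : k.val ≠ k1.val := by
            intro hh; apply hn; rw [Fin.ext hh]; exact h1
          have n2 : k.val ≠ k2.val := by
            intro hh; apply hn; rw [Fin.ext hh]; exact h2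
          omega
        · rw [hA _ _ (by omega)]
          exact ⟨rfl, hlt, le_rfl⟩
      have : ∀ (e e' : D.E) (k1 : Fin (w e)) (k2 : Fin (w e')), mkE D w e k1 ∈ F → mkE D w e' k2 ∈ F → e = e' →
          mkE D w e k1 = mkE D w e' k2 := by
        rintro e e' k1 k2 h1 h2 rfl
        have a1 := key e k1 k2 h1 h2
        have a2 := key e k2 k1 h2 h1
        have : k1 = k2 := le_antisymm (not_lt.1 a2) (not_lt.1 a1)
        rw [this]
      intro x h1 y h2 hxy
      obtain ⟨k1, hk1⟩ := mkE_rep D w x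
      obtain ⟨k2, hk2⟩ := mkE_rep D w y
      rw [hk1, hk2]
      exact this _ _ k1 k2 (hk1 ▸ h1) (hk2 ▸ h2) hxy
    · rw [conn_iff]
      intro A hA u v hu
      have hz : ∀ x y, zeroRel D w x y → A x = A y := by
        rintro x y ⟨e, he, rfl, rfl⟩
        apply propext
        apply hA
        simp only [Finset.mem_sdiff, Finset.mem_univ, true_and, Finset.mem_image, not_exists, not_and]
        intro x _ hx
        obtain ⟨k, hk⟩ := mkE_rep D w x
        have := k.2
        have hx' : w (fs D w x) = 0 := by rw [hx]; exact he
        omega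
      let B : D.E → ℕ → Prop := fun e j => 
        if ∃ k : Fin (w e), mkE D w e k ∈ F ∧ k.val < j then A (D.tgt e) else A (D.src e)
      let A' : Quot (zeroRel D w) ⊕ (Σ f : D.E, Fin (w f - 1)) → Prop :=
        Sum.elim (Quot.lift A hz) (fun x => B x.1 (x.2.val + 1))
      have hA' : ∀ e j, j ≤ w e → (A' (chainNode D w e j) ↔ B e j) := by
        intro f j hj
        rcases Nat.eq_zero_or_pos j with rfl | hpos
        · rw [chainNode_zero]; simp [A', B]
        rcases hj.lt_or_eq with hlt' | rfl
        · obtain ⟨j, rfl⟩ := Nat.exists_eq_succ_of_ne_zero hpos.ne'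
          have := chainNode_mid D w f ⟨j, by omega⟩
          simp only [Nat.succ_eq_add_one] at *
          rw [this]
          exact Iff.rfl
        · rw [chainNode_end]
          show A (D.tgt f) ↔ B f (w f)
          simp only [B]
          split_ifs with hh
          · rfl
          · refine (hA f ?_).symm
            simp only [Finset.mem_sdiff, Finset.mem_univ, true_and, Finset.mem_image, not_exists, not_and]
            rintro x hk rfl
            obtain ⟨k, hk'⟩ := mkE_rep D w x
            exact hh ⟨k, hk' ▸ hk, k.2⟩
      have := h A' ?_ (Sum.inl (Quot.mk _ u)) (Sum.inl (Quot.mk _ v)) hu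
      · exact this
      · rintro ⟨f, k⟩ he
        show A' (chainNode D w f k.val) ↔ A' (chainNode D w f (k.val+1))
        rw [hA' f k.val (by omega), hA' f (k.val+1) (by omega)]
        have hn : mkE D w f k ∉ F := (Finset.mem_sdiff.1 he).2
        have : (∃ k' : Fin (w f), mkE D w f k' ∈ F ∧ k'.val < k.val) ↔
            (∃ k' : Fin (w f), mkE D w f k' ∈ F ∧ k'.val < k.val + 1) := by
          refine exists_congr fun k' => and_congr_right fun hk' => ?_
          have : k'.val ≠ k.val := by
            intro hh; apply hn; rw [← Fin.ext hh]; exact hk'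
          omega
        simp only [B, this]
  · rintro ⟨hinj, hD⟩
    rw [conn_iff] at hD ⊢
    intro A hA
    have step : ∀ (e : D.E) (k : Fin (w e)), mkE D w e k ∉ F →
        (A (chainNode D w e k.val) ↔ A (chainNode D w e (k.val + 1))) := by
      intro e k hk
      exact hA (mkE D w e k) (Finset.mem_sdiff.2 ⟨Finset.mem_univ _, hk⟩)
    have seg : ∀ (e : D.E) (i n : ℕ), i + n ≤ w e → (∀ k : Fin (w e), i ≤ k.val → k.val < i + n →
        mkE D w e k ∉ F) → (A (chainNode D w e i) ↔ A (chainNode D w e (i + n))) := by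
      intro e i n
      induction n with
      | zero => intro _ _; rfl
      | succ n ih =>
        intro h1 h2
        rw [ih (by omega) (fun k a b => h2 k a (by omega))]
        exact step e ⟨i + n, by omega⟩ (h2 ⟨i+n, by omega⟩ (by simp) (by simp))
    have hD' := hD (fun v => A (Sum.inl (Quot.mk _ v))) (by
      intro e he
      have hne : ∀ k : Fin (w e), mkE D w e k ∉ F := by
        intro k hk
        exact (Finset.mem_sdiff.1 he).2 (Finset.mem_image.2 ⟨_, hk, rfl⟩)
      have := seg e 0 (w e) (by omega) (fun k _ _ => hne k)
      rw [Nat.zero_add, chainNode_zero, chainNode_end] at this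
      exact this)
    have node : ∀ x : (subdivide D w).V, ∃ v : D.V, (A x ↔ A (Sum.inl (Quot.mk _ v))) := by
      rintro (q | ⟨e, i⟩)
      · obtain ⟨v, rfl⟩ := Quot.exists_rep q
        exact ⟨v, Iff.rfl⟩
      · rw [← chainNode_mid]
        have hi := i.2
        by_cases hh : ∃ k : Fin (w e), mkE D w e k ∈ F ∧ k.val < i.val + 1
        · obtain ⟨k, hk, hlt⟩ := hh
          refine ⟨D.tgt e, ?_⟩
          have := seg e (i.val + 1) (w e - (i.val + 1)) (by omega) (by
            intro k' h1 _ hk'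
            have := hinj hk hk' rfl
            have := mkE_inj D w e _ _ this
            subst this
            omega)
          rw [Nat.add_sub_cancel' (by omega), chainNode_end] at this
          exact this
        · refine ⟨D.src e, ?_⟩
          have := seg e 0 (i.val + 1) (by omega) (by
            intro k' _ h2 hk'
            exact hh ⟨k', hk', by omega⟩)
          rw [Nat.zero_add, chainNode_zero] at this
          exact this.symm
    intro u v hu
    obtain ⟨u', hu'⟩ := node u
    obtain ⟨v', hv'⟩ := node v
    exact hv'.2 (hD' u' v' (hu'.1 hu))

lemma c_subdivide (D : Multigraph) (w : D.E → ℕ) (i : ℕ) :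
    c (subdivide D w) i = ∑ X ∈ (Finset.univ : Finset (Finset D.E)).filter
      (fun X => X.card = i ∧ D.ConnOn (Finset.univ \ X)), ∏ e ∈ X, w e := by
  unfold c
  rw [Finset.card_eq_sum_card_fiberwise (t := (Finset.univ : Finset (Finset D.E)).filter
      (fun X => X.card = i ∧ D.ConnOn (Finset.univ \ X)))
      (f := fun F : Finset (subdivide D w).E => Finset.image (fs D w) F)]
  · refine Finset.sum_congr rfl fun X hX => ?_
    have : ∏ e ∈ X, w e = Fintype.card ((e : X) → Fin (w e)) := by
      rw [Fintype.card_pi, ← Finset.prod_attach]; simp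
    rw [this, ← Finset.card_univ]
    symm
    simp only [Finset.mem_filter, Finset.mem_univ, true_and] at hX
    have him : ∀ g : (e : X) → Fin (w e), Finset.image (fs D w)
        (Finset.image (fun e : X => mkE D w e.1 (g e)) Finset.univ) = X := by
      intro g; ext x; simp
    have hin : ∀ g : (e : X) → Fin (w e), Set.InjOn (fs D w)
        (Finset.image (fun e : X => mkE D w e.1 (g e)) Finset.univ : Finset _) := by
      intro g a ha b hb hab
      simp only [Finset.coe_image, Finset.coe_univ, Set.image_univ, Set.mem_range] at ha hb
      obtain ⟨x, rfl⟩ := ha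
      obtain ⟨y, rfl⟩ := hb
      have : x = y := Subtype.ext hab
      rw [this]
    refine Finset.card_bij (fun g _ => Finset.image (fun e : X => mkE D w e.1 (g e)) Finset.univ) ?_ ?_ ?_
    · intro g _
      simp only [Finset.mem_filter, Finset.mem_univ, true_and]
      refine ⟨⟨?_, (conn_subdivide D w _).2 ⟨hin g, ?_⟩⟩, him g⟩
      · have := Finset.card_image_of_injOn (hin g)
        rw [him g] at this
        exact this.symm.trans hX.1
      · rw [him g]; exact hX.2
    · intro g _ g' _ h
      funext x
      have : mkE D w x.1 (g x) ∈ Finset.image (fun e : X => mkE D w e.1 (g' e)) Finset.univ := by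
        rw [← h]; simp
      simp only [Finset.mem_image, Finset.mem_univ, true_and] at this
      obtain ⟨y, hy⟩ := this
      have hxy : y = x := Subtype.ext (congrArg (fs D w) hy)
      subst hxy
      exact (mkE_inj D w _ _ _ hy).symm
    · intro F hF
      simp only [Finset.mem_filter, Finset.mem_univ, true_and] at hF
      obtain ⟨⟨hc, hconn⟩, hX'⟩ := hF
      have hinj := ((conn_subdivide D w F).1 hconn).1
      have hex : ∀ e : X, ∃ k : Fin (w e), mkE D w e.1 k ∈ F := by
        rintro ⟨e, he⟩
        rw [← hX'] at he
        obtain ⟨x, hk, rfl⟩ := Finset.mem_image.1 he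
        obtain ⟨k, hk'⟩ := mkE_rep D w x
        exact ⟨k, hk' ▸ hk⟩
      choose g hg using hex
      refine ⟨g, Finset.mem_univ _, ?_⟩
      ext x
      simp only [Finset.mem_image, Finset.mem_univ, true_and]
      constructor
      · rintro ⟨y, rfl⟩; exact hg y
      · intro hx
        have hx1 : fs D w x ∈ X := by rw [← hX']; exact Finset.mem_image_of_mem _ hx
        exact ⟨⟨_, hx1⟩, hinj (hg ⟨_, hx1⟩) hx rfl⟩
  · intro F hF
    have hF' := (Finset.mem_filter.1 hF).2
    have := (conn_subdivide D w F).1 hF'.2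
    simp only [Finset.coe_filter, Finset.mem_univ, true_and, Set.mem_ofPred_eq]
    refine ⟨?_, this.2⟩
    rw [Finset.card_image_of_injOn this.1]
    exact hF'.1

def T6 (a b c d e f : ℕ) : ℕ :=
  a*b*d + a*b*e + a*b*f + a*c*d + a*c*e + a*c*f + a*d*f + a*e*f
   + b*c*d + b*c*e + b*c*f + b*d*e + b*e*f + c*d*e + c*d*f + d*e*f + 0

def E6 (a b c d e f : ℕ) : ℕ :=
  a*b+a*c+a*d+a*e+a*f+b*c+b*d+b*e+b*f+c*d+c*e+c*f+d*e+d*f+e*f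

def Good (a b c d e f : ℕ) : Prop :=
  ∃ a' b' c' d' e' f' : ℕ, a'+b'+c'+d'+e'+f' = a+b+c+d+e+f ∧
    (a ≠ 0 → a' ≠ 0) ∧ (b ≠ 0 → b' ≠ 0) ∧ (c ≠ 0 → c' ≠ 0) ∧ (d ≠ 0 → d' ≠ 0) ∧
    (e ≠ 0 → e' ≠ 0) ∧ (f ≠ 0 → f' ≠ 0) ∧
    E6 a b c d e f < E6 a' b' c' d' e' f' ∧ T6 a b c d e f < T6 a' b' c' d' e' f'

lemma good_s1 {a b c d e f : ℕ} (h : Good a d e b c f) : Good a b c d e f := by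
  obtain ⟨a', d', e', b', c', f', hs, h1, h2, h3, h4, h5, h6, hE, hT⟩ := h
  refine ⟨a', b', c', d', e', f', by omega, h1, h4, h5, h2, h3, h6, ?_, ?_⟩
  · unfold E6 at *; linarith
  · unfold T6 at *; linarith

lemma good_s2 {a b c d e f : ℕ} (h : Good b a c d f e) : Good a b c d e f := by
  obtain ⟨b', a', c', d', f', e', hs, h1, h2, h3, h4, h5, h6, hE, hT⟩ := h
  refine ⟨a', b', c', d', e', f', by omega, h2, h1, h3, h4, h6, h5, ?_, ?_⟩
  · unfold E6 at *; linarith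
  · unfold T6 at *; linarith

lemma good_s3 {a b c d e f : ℕ} (h : Good a c b e d f) : Good a b c d e f := by
  obtain ⟨a', c', b', e', d', f', hs, h1, h2, h3, h4, h5, h6, hE, hT⟩ := h
  refine ⟨a', b', c', d', e', f', by omega, h1, h3, h2, h5, h4, h6, ?_, ?_⟩
  · unfold E6 at *; linarith
  · unfold T6 at *; linarith

lemma T_s1 (a b c d e f : ℕ) : T6 a d e b c f = T6 a b c d e f := by unfold T6; ring
lemma T_s2 (a b c d e f : ℕ) : T6 b a c d f e = T6 a b c d e f := by unfold T6; ring
lemma T_s3 (a b c d e f : ℕ) : T6 a c b e d f = T6 a b c d e f := by unfold T6; ring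

lemma opp_core {B C D E U : ℤ} (hU : 0 ≤ U) (hB : 0 ≤ B) (hD : 0 ≤ D) (q1 : B ≤ E) (q2 : D ≤ C)
    (h1 : E - B ≤ U + 2) (h2 : C - D ≤ U + 2) (hS : 0 < B + C + D + E)
    (hcon : (U + 1) * (B + C + D + E) ≤ (E - B) * (C - D)) : U = 0 ∧ B = 0 ∧ D = 0 ∧ E = 2 ∧ C = 2 := by
  have r1 : (E - B) * (C - D) ≤ (U+2) * (C - D) := mul_le_mul_of_nonneg_right (by linarith) (by linarith)
  have r2 : (E - B) * (C - D) ≤ (E - B) * (U+2) := mul_le_mul_of_nonneg_left (by linarith) (by linarith)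
  have r3 : U * (B + C + D + E) ≤ 0 := by nlinarith [mul_nonneg hU (add_nonneg hB hD)]
  have r4 : U = 0 := by
    rcases hU.lt_or_eq with hu | hu
    · nlinarith [mul_pos hu hS]
    · exact hu.symm
  subst r4
  have b0 : B = 0 := by linarith
  subst b0
  have d0 : D = 0 := by linarith
  subst d0
  have ce : C = E := by linarith
  subst ce
  have : C = 2 := by
    have h : C * (C - 2) = 0 := by linarith
    rcases mul_eq_zero.1 h with h | h <;> linarith
  exact ⟨rfl, rfl, rfl, this, this⟩

lemma opp_case {a b c d e f : ℕ} (hT : 0 < T6 a b c d e f)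
    (hb : b ≤ a) (hc : c ≤ a) (hd : d ≤ a) (he : e ≤ a)
    (kb : f ≤ b) (kc : f ≤ c) (kd : f ≤ d) (ke : f ≤ e) (h : f + 2 ≤ a) : Good a b c d e f := by
  obtain ⟨t, rfl⟩ := Nat.exists_eq_add_of_le h
  have hA : 0 < b + c + d + e := by
    by_contra hh
    have : b = 0 ∧ c = 0 ∧ d = 0 ∧ e = 0 := by omega
    obtain ⟨rfl, rfl, rfl, rfl⟩ := this
    simp [T6] at hT
  by_cases hx : (t : ℤ) = 0 ∧ f = 0 ∧ (((b : ℤ) = 2 ∧ e = 0 ∧ c = 0 ∧ d = 2) ∨ (b = 0 ∧ e = 2 ∧ c = 2 ∧ d = 0))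
  · obtain ⟨h1, rfl, h2⟩ := hx
    have : t = 0 := by omega
    subst this
    rcases h2 with ⟨h2, rfl, rfl, rfl⟩ | ⟨rfl, rfl, rfl, rfl⟩
    · have : b = 2 := by omega
      subst this
      exact ⟨1, 2, 1, 2, 0, 0, by decide⟩
    · exact ⟨1, 1, 2, 0, 2, 0, by decide⟩
  · refine ⟨f + 1 + t, b, c, d, e, f + 1, by omega, by omega, by tauto, by tauto, by tauto, by tauto, by omega, ?_, ?_⟩
    · unfold E6; zify; nlinarith
    · have key : (0 : ℤ) < (t + 1) * (b + c + d + e) + ((b : ℤ) - e) * (c - d) := by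
        have hF : (0 : ℤ) ≤ f := by positivity
        have hU : (0 : ℤ) ≤ t := by positivity
        have e0 : (0 : ℤ) ≤ e := by positivity
        have e1 : (0 : ℤ) ≤ d := by positivity
        have e2 : (0 : ℤ) ≤ c := by positivity
        have e3 : (0 : ℤ) ≤ b := by positivity
        clear hT
        zify at *
        generalize (b : ℤ) = B at *; generalize (c : ℤ) = C at *; generalize (d : ℤ) = D at *; generalize (e : ℤ) = E at *; generalize (f : ℤ) = F at *; generalize (t : ℤ) = U at *
        rcases le_total B E with q1 | q1 <;> rcases le_total C D with q2 | q2
        · nlinarith [mul_nonneg (sub_nonneg.2 q1) (sub_nonneg.2 q2)]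
        · by_contra hcon
          obtain ⟨z1, z2, z3, z4, z5⟩ := opp_core hU e3 e1 q1 q2 (by linarith) (by linarith) (by linarith) (by linarith)
          exact hx ⟨z1, by linarith, Or.inr ⟨z2, z4, z5, z3⟩⟩
        · by_contra hcon
          obtain ⟨z1, z2, z3, z4, z5⟩ := opp_core hU e0 e2 q1 q2 (by linarith) (by linarith) (by linarith) (by linarith)
          exact hx ⟨z1, by linarith, Or.inl ⟨z4, z2, z3, z5⟩⟩
        · nlinarith [mul_nonneg (sub_nonneg.2 q1) (sub_nonneg.2 q2)]
      unfold T6; zify; linarith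

lemma adj_case {a b c d e f : ℕ} (hT : 0 < T6 a b c d e f)
    (hc : c ≤ a) (hd : d ≤ a) (hf : f ≤ a)
    (ke : b ≤ e) (h : b + 2 ≤ a) : Good a b c d e f := by
  obtain ⟨t, rfl⟩ := Nat.exists_eq_add_of_le h
  have hA : 0 < d + e + f := by
    by_contra hh
    have : d = 0 ∧ e = 0 ∧ f = 0 := by omega
    obtain ⟨rfl, rfl, rfl⟩ := this
    simp [T6] at hT
  by_cases hx : t = 0 ∧ b = 0 ∧ d = 2 ∧ e = 0 ∧ f = 2
  · obtain ⟨rfl, rfl, rfl, rfl, rfl⟩ := hx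
    have : c = 0 ∨ c = 1 ∨ c = 2 := by omega
    rcases this with rfl | rfl | rfl
    · exact ⟨1, 0, 0, 2, 1, 2, by decide⟩
    · exact ⟨1, 0, 1, 2, 1, 2, by decide⟩
    · exact ⟨1, 1, 2, 2, 1, 1, by decide⟩
  · refine ⟨b + 1 + t, b + 1, c, d, e, f, by omega, by omega, by omega, by tauto, by tauto, by tauto, by tauto, ?_, ?_⟩
    · unfold E6; zify; nlinarith
    · have key : (0 : ℤ) < (t + 1) * (d + e + f) + (d : ℤ) * (e - f) := by
        by_cases q : f ≤ e + (t + 1)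
        · zify at *
          by_cases hd0 : (e : ℤ) + f = 0
          · have : (e : ℤ) = 0 := by omega
            have : (f : ℤ) = 0 := by omega
            nlinarith
          · have : 0 < (e : ℤ) + f := by omega
            nlinarith [mul_nonneg (show (0 : ℤ) ≤ d by positivity) (sub_nonneg.2 q), mul_nonneg (show (0 : ℤ) ≤ t by positivity) this.le]
        · have h1 : f = b + 2 + t := by omega
          have h2 : e = b := by omega
          subst h1 h2
          push_cast
          by_contra hcon
          zify at hd
          have t0 : (0 : ℤ) ≤ t := by positivity
          have e0 : (0 : ℤ) ≤ e := by positivity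
          have : (t : ℤ) = 0 := by nlinarith [mul_nonneg t0 e0, mul_nonneg t0 t0]
          have : (e : ℤ) = 0 := by nlinarith [mul_nonneg t0 e0, mul_nonneg t0 t0]
          have : (d : ℤ) = 2 := by nlinarith [mul_nonneg t0 e0, mul_nonneg t0 t0]
          apply hx; omega
      unfold T6; zify; linarith

lemma max_case {a b c d e f : ℕ} (hT : 0 < T6 a b c d e f)
    (hb : b ≤ a) (hc : c ≤ a) (hd : d ≤ a) (he : e ≤ a) (hf : f ≤ a)
    (h : b + 2 ≤ a ∨ c + 2 ≤ a ∨ d + 2 ≤ a ∨ e + 2 ≤ a ∨ f + 2 ≤ a) : Good a b c d e f := by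
  by_cases hm : f ≤ b ∧ f ≤ c ∧ f ≤ d ∧ f ≤ e
  · exact opp_case hT hb hc hd he hm.1 hm.2.1 hm.2.2.1 hm.2.2.2 (by omega)
  have : (b + 2 ≤ a ∧ b ≤ e) ∨ (c + 2 ≤ a ∧ c ≤ d) ∨ (d + 2 ≤ a ∧ d ≤ c) ∨ (e + 2 ≤ a ∧ e ≤ b) := by omega
  rcases this with ⟨h1, h2⟩ | ⟨h1, h2⟩ | ⟨h1, h2⟩ | ⟨h1, h2⟩
  · exact adj_case hT hc hd hf h2 h1
  · exact good_s3 (adj_case (by rw [T_s3]; exact hT) hb he hf h2 h1)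
  · exact good_s1 (adj_case (by rw [T_s1]; exact hT) he hb hf h2 h1)
  · exact good_s1 (good_s3 (adj_case (by rw [T_s3, T_s1]; exact hT) hd hc hf h2 h1))

lemma good_of {a b c d e f : ℕ} (hT : 0 < T6 a b c d e f)
    (h : ∃ x ∈ [a,b,c,d,e,f], ∃ y ∈ [a,b,c,d,e,f], y + 2 ≤ x) : Good a b c d e f := by
  have ha : ∀ {a b c d e f : ℕ}, 0 < T6 a b c d e f → 
    (∃ x ∈ [a,b,c,d,e,f], ∃ y ∈ [a,b,c,d,e,f], y + 2 ≤ x) → (b ≤ a ∧ c ≤ a ∧ d ≤ a ∧ e ≤ a ∧ f ≤ a) → Good a b c d e f := by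
    rintro a b c d e f hT ⟨x, hx, y, hy, hxy⟩ ⟨hb, hc, hd, he, hf⟩
    apply max_case hT hb hc hd he hf
    have hxa : x ≤ a := by
      simp only [List.mem_cons, List.not_mem_nil, or_false] at hx
      omega
    simp only [List.mem_cons, List.not_mem_nil, or_false] at hy
    omega
  have hb : ∀ {a b c d e f : ℕ}, 0 < T6 a b c d e f → 
    (∃ x ∈ [a,b,c,d,e,f], ∃ y ∈ [a,b,c,d,e,f], y + 2 ≤ x) → (a ≤ b ∧ c ≤ b ∧ d ≤ b ∧ e ≤ b ∧ f ≤ b) → Good a b c d e f := by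
    intro a b c d e f hT hx hh
    refine good_s2 (ha (by rw [T_s2]; exact hT) ?_ (by omega))
    simpa only [List.mem_cons, List.not_mem_nil, or_false, or_comm, or_left_comm] using hx
  have hd : ∀ {a b c d e f : ℕ}, 0 < T6 a b c d e f → 
    (∃ x ∈ [a,b,c,d,e,f], ∃ y ∈ [a,b,c,d,e,f], y + 2 ≤ x) → (a ≤ d ∧ b ≤ d ∧ c ≤ d ∧ e ≤ d ∧ f ≤ d) → Good a b c d e f := by
    intro a b c d e f hT hx hh
    refine good_s1 (hb (by rw [T_s1]; exact hT) ?_ (by omega))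
    simpa only [List.mem_cons, List.not_mem_nil, or_false, or_comm, or_left_comm] using hx
  have hc : ∀ {a b c d e f : ℕ}, 0 < T6 a b c d e f → 
    (∃ x ∈ [a,b,c,d,e,f], ∃ y ∈ [a,b,c,d,e,f], y + 2 ≤ x) → (a ≤ c ∧ b ≤ c ∧ d ≤ c ∧ e ≤ c ∧ f ≤ c) → Good a b c d e f := by
    intro a b c d e f hT hx hh
    refine good_s3 (hb (by rw [T_s3]; exact hT) ?_ (by omega))
    simpa only [List.mem_cons, List.not_mem_nil, or_false, or_comm, or_left_comm] using hx
  have he : ∀ {a b c d e f : ℕ}, 0 < T6 a b c d e f → 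
    (∃ x ∈ [a,b,c,d,e,f], ∃ y ∈ [a,b,c,d,e,f], y + 2 ≤ x) → (a ≤ e ∧ b ≤ e ∧ c ≤ e ∧ d ≤ e ∧ f ≤ e) → Good a b c d e f := by
    intro a b c d e f hT hx hh
    refine good_s3 (hd (by rw [T_s3]; exact hT) ?_ (by omega))
    simpa only [List.mem_cons, List.not_mem_nil, or_false, or_comm, or_left_comm] using hx
  have hf : ∀ {a b c d e f : ℕ}, 0 < T6 a b c d e f → 
    (∃ x ∈ [a,b,c,d,e,f], ∃ y ∈ [a,b,c,d,e,f], y + 2 ≤ x) → (a ≤ f ∧ b ≤ f ∧ c ≤ f ∧ d ≤ f ∧ e ≤ f) → Good a b c d e f := by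
    intro a b c d e f hT hx hh
    refine good_s2 (he (by rw [T_s2]; exact hT) ?_ (by omega))
    simpa only [List.mem_cons, List.not_mem_nil, or_false, or_comm, or_left_comm] using hx
  have : (b ≤ a ∧ c ≤ a ∧ d ≤ a ∧ e ≤ a ∧ f ≤ a) ∨ (a ≤ b ∧ c ≤ b ∧ d ≤ b ∧ e ≤ b ∧ f ≤ b) ∨
    (a ≤ c ∧ b ≤ c ∧ d ≤ c ∧ e ≤ c ∧ f ≤ c) ∨ (a ≤ d ∧ b ≤ d ∧ c ≤ d ∧ e ≤ d ∧ f ≤ d) ∨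
    (a ≤ e ∧ b ≤ e ∧ c ≤ e ∧ d ≤ e ∧ f ≤ e) ∨ (a ≤ f ∧ b ≤ f ∧ c ≤ f ∧ d ≤ f ∧ e ≤ f) := by
    obtain ⟨i, hi⟩ := Finite.exists_max ![a,b,c,d,e,f]
    have i0 := hi 0
    have i1 := hi 1
    have i2 := hi 2
    have i3 := hi 3
    have i4 := hi 4
    have i5 := hi 5
    clear hi
    fin_cases i <;> simp at i0 i1 i2 i3 i4 i5 <;> simp [*]
  rcases this with q | q | q | q | q | q
  · exact ha hT h q
  · exact hb hT h q
  · exact hc hT h q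
  · exact hd hT h q
  · exact he hT h q
  · exact hf hT h q

def relZ (D : Multigraph) (Z : Finset D.E) : D.V → D.V → Prop :=
  fun u v => ∃ e ∈ Z, D.src e = u ∧ D.tgt e = v

def q (D : Multigraph) (Z : Finset D.E) : ℕ := Fintype.card (Quot (relZ D Z))

lemma zeroRel_eq (D : Multigraph) (w : D.E → ℕ) :
    zeroRel D w = relZ D (Finset.univ.filter fun e => w e = 0) := by
  funext u v
  simp [zeroRel, relZ]

lemma acyclic_iff (D : Multigraph) (w : D.E → ℕ) : ZeroAcyclic D w ↔
    q D (Finset.univ.filter fun e => w e = 0) + (Finset.univ.filter fun e => w e = 0).card = Fintype.card D.V := by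
  unfold ZeroAcyclic q
  rw [zeroRel_eq]

lemma q_insert (D : Multigraph) (Z : Finset D.E) (b : D.E) : q D Z ≤ q D (insert b Z) + 1 := by
  let g : D.V → Quot (relZ D Z) := fun a =>
    if Quot.mk (relZ D Z) a = Quot.mk _ (D.src b) then Quot.mk _ (D.tgt b) else Quot.mk _ a
  have hg : ∀ x y, relZ D (insert b Z) x y → g x = g y := by
    rintro x y ⟨e, he, rfl, rfl⟩
    rcases Finset.mem_insert.1 he with rfl | he
    · simp [g]
    · have : Quot.mk (relZ D Z) (D.src e) = Quot.mk _ (D.tgt e) := Quot.sound ⟨e, he, rfl, rfl⟩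
      simp [g, this]
  let G : Quot (relZ D (insert b Z)) → Quot (relZ D Z) := Quot.lift g hg
  have hsub : (Finset.univ : Finset (Quot (relZ D Z))) ⊆
      insert (Quot.mk _ (D.src b)) (Finset.univ.image G) := by
    intro x _
    obtain ⟨a, rfl⟩ := Quot.exists_rep x
    by_cases h : Quot.mk (relZ D Z) a = Quot.mk _ (D.src b)
    · rw [h]; exact Finset.mem_insert_self _ _
    · refine Finset.mem_insert_of_mem (Finset.mem_image.2 ⟨Quot.mk _ a, Finset.mem_univ _, ?_⟩)
      show g a = _
      simp [g, h]
  unfold q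
  calc Fintype.card (Quot (relZ D Z)) = (Finset.univ : Finset (Quot (relZ D Z))).card := rfl
    _ ≤ _ := Finset.card_le_card hsub
    _ ≤ (Finset.univ.image G).card + 1 := Finset.card_insert_le _ _
    _ ≤ _ := Nat.add_le_add_right Finset.card_image_le 1

lemma q_union (D : Multigraph) (Z Y : Finset D.E) : q D Z ≤ q D (Y ∪ Z) + Y.card := by
  induction Y using Finset.induction_on with
  | empty => simp
  | insert b Y hb ih =>
    rw [Finset.card_insert_of_notMem hb, Finset.insert_union]
    have := q_insert D (Y ∪ Z) b
    omega

lemma q_empty (D : Multigraph) : Fintype.card D.V ≤ q D ∅ := by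
  refine Fintype.card_le_of_injective (fun v => Quot.mk (relZ D ∅) v) ?_
  intro x y h
  have hl : ∀ a b, relZ D ∅ a b → a = b := by
    rintro a b ⟨e, he, _⟩
    simp at he
  exact congrArg (Quot.lift id hl) h

lemma q_lower (D : Multigraph) (Z : Finset D.E) : Fintype.card D.V ≤ q D Z + Z.card := by
  have := q_union D ∅ Z
  have h2 := q_empty D
  simp only [Finset.union_empty] at this
  omega

lemma acyclic_mono (D : Multigraph) (w w' : D.E → ℕ) (h : ∀ e, w e ≠ 0 → w' e ≠ 0) (hw : ZeroAcyclic D w) :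
    ZeroAcyclic D w' := by
  rw [acyclic_iff] at *
  set Z := Finset.univ.filter fun e => w e = 0
  set Z' := Finset.univ.filter fun e => w' e = 0
  have hs : Z' ⊆ Z := by
    intro e he
    simp only [Z, Z', Finset.mem_filter, Finset.mem_univ, true_and] at *
    by_contra hh
    exact h e hh he
  have h1 := q_lower D Z'
  have h2 := q_union D Z' (Z \ Z')
  rw [Finset.sdiff_union_of_subset hs] at h2
  have h3 := Finset.card_sdiff_add_card_eq_card hs
  omega

lemma no_cycle (D : Multigraph) (w : D.E → ℕ) (hw : ZeroAcyclic D w) (b : D.E) (hb : w b = 0)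
    (h : Quot.mk (relZ D ((Finset.univ.filter fun e => w e = 0).erase b)) (D.src b) = Quot.mk _ (D.tgt b)) : False := by
  rw [acyclic_iff] at hw
  set Z := Finset.univ.filter fun e => w e = 0
  have hbZ : b ∈ Z := by simp [Z, hb]
  have h1 := q_lower D (Z.erase b)
  have h3 := Finset.card_erase_add_one hbZ
  have h2 : q D (Z.erase b) ≤ q D Z := by
    have hl : ∀ x y, relZ D Z x y → Quot.mk (relZ D (Z.erase b)) x = Quot.mk (relZ D (Z.erase b)) y := by
      rintro x y ⟨e, he, rfl, rfl⟩
      by_cases heb : e = b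
      · rw [heb]; exact h
      · exact Quot.sound ⟨e, Finset.mem_erase.2 ⟨heb, he⟩, rfl, rfl⟩
    refine Fintype.card_le_of_surjective (Quot.lift _ hl) ?_
    intro x
    obtain ⟨a, rfl⟩ := Quot.exists_rep x
    exact ⟨Quot.mk _ a, rfl⟩
  omega

lemma nV_subdivide (w : K4.E → ℕ) (hw : ZeroAcyclic K4 w) (hcard : Fintype.card K4.E = 6)
    : (subdivide K4 w).nV + 2 = ∑ e, w e := by
  have h1 : (subdivide K4 w).nV = Fintype.card (Quot (zeroRel K4 w)) + ∑ e, (w e - 1) := by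
    show Fintype.card (Quot (zeroRel K4 w) ⊕ (Σ f : K4.E, Fin (w f - 1))) = _
    rw [Fintype.card_sum, Fintype.card_sigma]; simp
  have h2 : ∑ e, (w e - 1) + 6 = ∑ e, w e + (Finset.univ.filter fun e : K4.E => w e = 0).card := by
    rw [Finset.card_filter, ← hcard, ← Finset.card_univ, Finset.card_eq_sum_ones, ← Finset.sum_add_distrib, ← Finset.sum_add_distrib]
    refine Finset.sum_congr rfl fun e _ => ?_
    split_ifs <;> omega
  have h3 : Fintype.card K4.V = 4 := rfl
  unfold ZeroAcyclic at hw
  omega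

lemma nE_subdivide (D : Multigraph) (w : D.E → ℕ) : (subdivide D w).nE = ∑ e, w e := by
  show Fintype.card (Σ f : D.E, Fin (w f)) = _
  simp

def S6 : Fin 6 → Fin 4 := ![0,0,0,1,1,2]
def T4 : Fin 6 → Fin 4 := ![1,2,3,2,3,3]

def ed (k : Fin 6) : K4.E := ⟨(S6 k, T4 k), by revert k; decide⟩

lemma ed_src (k : Fin 6) : K4.src (ed k) = S6 k := rfl
lemma ed_tgt (k : Fin 6) : K4.tgt (ed k) = T4 k := rfl

lemma ed_inj : Function.Injective ed := by
  intro i j h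
  have h1 : (S6 i, T4 i) = (S6 j, T4 j) := congrArg Subtype.val h
  revert i j
  have : ∀ i j : Fin 6, (S6 i, T4 i) = (S6 j, T4 j) → i = j := by decide
  intro i j _ h
  exact this i j h

lemma ed_surj : Function.Surjective ed := by
  rintro ⟨⟨i, j⟩, h⟩
  have : ∀ i j : Fin 4, i < j → ∃ k, (S6 k, T4 k) = (i, j) := by decide
  obtain ⟨k, hk⟩ := this i j h
  exact ⟨k, Subtype.ext hk⟩

def edE : Fin 6 ≃ K4.E := Equiv.ofBijective ed ⟨ed_inj, ed_surj⟩

lemma cardE : Fintype.card K4.E = 6 := by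
  rw [← Fintype.card_congr edE]; rfl

lemma sumE (w : K4.E → ℕ) : ∑ e, w e = w (ed 0) + w (ed 1) + w (ed 2) + w (ed 3) + w (ed 4) + w (ed 5) := by
  rw [← Equiv.sum_comp edE w, Fin.sum_univ_six]; rfl

lemma T6_pos (w : K4.E → ℕ) (hw : ZeroAcyclic K4 w) :
    0 < T6 (w (ed 0)) (w (ed 1)) (w (ed 2)) (w (ed 3)) (w (ed 4)) (w (ed 5)) := by
  have st : ∀ (b k : Fin 6), w (ed k) = 0 → k ≠ b →
      Quot.mk (relZ K4 ((Finset.univ.filter fun e => w e = 0).erase (ed b))) (S6 k) = Quot.mk _ (T4 k) := by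
    intro b k h hk
    exact Quot.sound ⟨ed k, by simp [h, ed_inj.eq_iff, hk], rfl, rfl⟩
  have t1 : ¬ (w (ed 0) = 0 ∧ w (ed 1) = 0 ∧ w (ed 3) = 0) := fun ⟨h1, h2, h3⟩ =>
    no_cycle K4 w hw (ed 1) h2 ((st 1 0 h1 (by decide)).trans (st 1 3 h3 (by decide)))
  have t2 : ¬ (w (ed 0) = 0 ∧ w (ed 2) = 0 ∧ w (ed 4) = 0) := fun ⟨h1, h2, h3⟩ =>
    no_cycle K4 w hw (ed 2) h2 ((st 2 0 h1 (by decide)).trans (st 2 4 h3 (by decide)))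
  have t3 : ¬ (w (ed 1) = 0 ∧ w (ed 2) = 0 ∧ w (ed 5) = 0) := fun ⟨h1, h2, h3⟩ =>
    no_cycle K4 w hw (ed 2) h2 ((st 2 1 h1 (by decide)).trans (st 2 5 h3 (by decide)))
  have t4 : ¬ (w (ed 3) = 0 ∧ w (ed 4) = 0 ∧ w (ed 5) = 0) := fun ⟨h1, h2, h3⟩ =>
    no_cycle K4 w hw (ed 4) h2 ((st 4 3 h1 (by decide)).trans (st 4 5 h3 (by decide)))
  have t5 : ¬ (w (ed 0) = 0 ∧ w (ed 3) = 0 ∧ w (ed 5) = 0 ∧ w (ed 2) = 0) := fun ⟨h1, h2, h3, h4⟩ =>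
    no_cycle K4 w hw (ed 2) h4 (((st 2 0 h1 (by decide)).trans (st 2 3 h2 (by decide))).trans (st 2 5 h3 (by decide)))
  have t6 : ¬ (w (ed 1) = 0 ∧ w (ed 3) = 0 ∧ w (ed 4) = 0 ∧ w (ed 2) = 0) := fun ⟨h1, h2, h3, h4⟩ =>
    no_cycle K4 w hw (ed 2) h4 (((st 2 1 h1 (by decide)).trans (st 2 3 h2 (by decide)).symm).trans (st 2 4 h3 (by decide)))
  have t7 : ¬ (w (ed 0) = 0 ∧ w (ed 4) = 0 ∧ w (ed 5) = 0 ∧ w (ed 1) = 0) := fun ⟨h1, h2, h3, h4⟩ =>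
    no_cycle K4 w hw (ed 1) h4 (((st 1 0 h1 (by decide)).trans (st 1 4 h2 (by decide))).trans (st 1 5 h3 (by decide)).symm)
  clear st hw
  generalize w (ed 0) = a at *
  generalize w (ed 1) = b at *
  generalize w (ed 2) = c at *
  generalize w (ed 3) = d at *
  generalize w (ed 4) = e at *
  generalize w (ed 5) = f at *
  by_contra hh
  have hT : T6 a b c d e f = 0 := by omega
  simp only [T6, Nat.add_eq_zero_iff, mul_eq_zero] at hT
  clear hh
  by_cases ha : a = 0 <;> by_cases hb : b = 0 <;> by_cases hc : c = 0 <;> by_cases hd : d = 0 <;>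
    by_cases he : e = 0 <;> by_cases hf : f = 0 <;> simp [ha, hb, hc, hd, he, hf] at t1 t2 t3 t4 t5 t6 t7 hT

def B (Y : Finset (Fin 6)) : Prop :=
  ∀ A : Fin 4 → Bool, (∀ k, k ∉ Y → A (S6 k) = A (T4 k)) → ∀ u v, A u = true → A v = true

instance (Y : Finset (Fin 6)) : Decidable (B Y) := by unfold B; infer_instance

lemma conn_B (Y : Finset (Fin 6)) :
    K4.ConnOn (Finset.univ \ Y.map edE.toEmbedding) ↔ B Y := by
  rw [conn_iff]
  constructor
  · intro h A hA u v hu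
    refine h (fun x => A x = true) ?_ u v hu
    intro e he
    obtain ⟨k, rfl⟩ := edE.surjective e
    have hk : k ∉ Y := by simpa using he
    show A (S6 k) = true ↔ A (T4 k) = true
    rw [hA k hk]
  · intro h A hA u v hu
    have := h (fun x => decide (A x)) ?_ u v (by simpa using hu)
    · simpa using this
    · intro k hk
      have := hA (edE k) (by simpa using hk)
      simp only [decide_eq_decide]
      exact this

lemma c_K4 (w : K4.E → ℕ) (i : ℕ) : c (subdivide K4 w) i =
    ∑ Y ∈ (Finset.univ : Finset (Finset (Fin 6))).filter (fun Y => Y.card = i ∧ B Y), ∏ k ∈ Y, w (ed k) := by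
  rw [c_subdivide]
  symm
  refine Finset.sum_bij (fun Y _ => Y.map edE.toEmbedding) ?_ ?_ ?_ ?_
  · intro Y hY
    simp only [Finset.mem_filter, Finset.mem_univ, true_and, Finset.card_map] at hY ⊢
    exact ⟨hY.1, (conn_B Y).2 hY.2⟩
  · intro Y _ Y' _ h
    exact Finset.map_injective _ h
  · intro F hF
    have hh : F = (F.map edE.symm.toEmbedding).map edE.toEmbedding := by
      ext x; simp
    refine ⟨F.map edE.symm.toEmbedding, ?_, hh.symm⟩
    simp only [Finset.mem_filter, Finset.mem_univ, true_and, Finset.card_map] at hF ⊢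
    exact ⟨hF.1, (conn_B _).1 (hh ▸ hF.2)⟩
  · intro Y _
    rw [Finset.prod_map]; rfl

lemma B_big : ∀ Y : Finset (Fin 6), 4 ≤ Y.card → ¬ B Y := by decide +kernel

lemma F1 : (Finset.univ : Finset (Finset (Fin 6))).filter (fun Y => Y.card = 1 ∧ B Y) =
    {{0},{1},{2},{3},{4},{5}} := by decide +kernel

lemma F2 : (Finset.univ : Finset (Finset (Fin 6))).filter (fun Y => Y.card = 2 ∧ B Y) =
    {{0,1},{0,2},{0,3},{0,4},{0,5},{1,2},{1,3},{1,4},{1,5},{2,3},{2,4},{2,5},{3,4},{3,5},{4,5}} := by decide +kernel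

lemma F3 : (Finset.univ : Finset (Finset (Fin 6))).filter (fun Y => Y.card = 3 ∧ B Y) =
    {{0,1,3},{0,1,4},{0,1,5},{0,2,3},{0,2,4},{0,2,5},{0,3,5},{0,4,5},
     {1,2,3},{1,2,4},{1,2,5},{1,3,4},{1,4,5},{2,3,4},{2,3,5},{3,4,5}} := by decide +kernel

lemma c0 (w : K4.E → ℕ) : c (subdivide K4 w) 0 = 1 := by
  have F0 : (Finset.univ : Finset (Finset (Fin 6))).filter (fun Y => Y.card = 0 ∧ B Y) = {∅} := by decide +kernel
  rw [c_K4, F0]; simp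

lemma c1 (w : K4.E → ℕ) : c (subdivide K4 w) 1 = ∑ e, w e := by
  rw [c_K4, F1, sumE]
  iterate 5 rw [Finset.sum_insert (by decide +kernel)]
  simp only [Finset.sum_singleton, Finset.prod_singleton]
  ring

lemma c2 (w : K4.E → ℕ) : c (subdivide K4 w) 2 =
    E6 (w (ed 0)) (w (ed 1)) (w (ed 2)) (w (ed 3)) (w (ed 4)) (w (ed 5)) := by
  rw [c_K4, F2]
  iterate 14 rw [Finset.sum_insert (by decide +kernel)]
  rw [Finset.sum_singleton]
  iterate 15 rw [Finset.prod_insert (by decide)]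
  simp only [Finset.prod_singleton, E6]
  ring

lemma c3 (w : K4.E → ℕ) : c (subdivide K4 w) 3 =
    T6 (w (ed 0)) (w (ed 1)) (w (ed 2)) (w (ed 3)) (w (ed 4)) (w (ed 5)) := by
  rw [c_K4, F3]
  iterate 15 rw [Finset.sum_insert (by decide +kernel)]
  rw [Finset.sum_singleton]
  repeat rw [Finset.prod_insert (by decide)]
  simp only [Finset.prod_singleton, T6]
  ring

lemma c4 (w : K4.E → ℕ) (i : ℕ) (hi : 4 ≤ i) : c (subdivide K4 w) i = 0 := by
  rw [c_K4]
  apply Finset.sum_eq_zero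
  intro Y hY
  simp only [Finset.mem_filter, Finset.mem_univ, true_and] at hY
  exact absurd hY.2 (B_big Y (by omega))

lemma exists_better (w : K4.E → ℕ) (hw : ZeroAcyclic K4 w) (himb : ¬ BalancedWeights w) :
    ∃ w' : K4.E → ℕ, ZeroAcyclic K4 w' ∧ ∑ e, w' e = ∑ e, w e ∧
      c (subdivide K4 w) 2 < c (subdivide K4 w') 2 ∧ c (subdivide K4 w) 3 < c (subdivide K4 w') 3 := by
  have hT := T6_pos w hw
  have hg : Good (w (ed 0)) (w (ed 1)) (w (ed 2)) (w (ed 3)) (w (ed 4)) (w (ed 5)) := by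
    apply good_of hT
    unfold BalancedWeights at himb
    push Not at himb
    obtain ⟨x, y, hxy⟩ := himb
    obtain ⟨i, rfl⟩ := ed_surj x
    obtain ⟨j, rfl⟩ := ed_surj y
    have hmem : ∀ k : Fin 6, w (ed k) ∈ [w (ed 0), w (ed 1), w (ed 2), w (ed 3), w (ed 4), w (ed 5)] := by
      intro k; fin_cases k <;> simp
    exact ⟨_, hmem i, _, hmem j, by omega⟩
  obtain ⟨a, b, c', d, e, f, hs, h0, h1, h2, h3, h4, h5, hE, hT'⟩ := hg
  let v : Fin 6 → ℕ := ![a, b, c', d, e, f]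
  have hv : ∀ k, v (edE.symm (ed k)) = v k := by
    intro k
    show v (edE.symm (edE k)) = v k
    simp
  refine ⟨fun x => v (edE.symm x), ?_, ?_, ?_, ?_⟩
  · refine acyclic_mono K4 w _ ?_ hw
    intro x
    obtain ⟨k, rfl⟩ := ed_surj x
    rw [hv k]
    fin_cases k
    · exact h0
    · exact h1
    · exact h2
    · exact h3
    · exact h4
    · exact h5
  · rw [sumE, sumE]
    simp only [hv]
    exact hs
  · rw [c2, c2]; simp only [hv]; exact hE
  · rw [c3, c3]; simp only [hv]; exact hT'

lemma main (n : ℕ) (hn : 1 ≤ n)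
    (G : Multigraph) (hG : memG G n (n + 2))
    (w : K4.E → ℕ) (hsub : IsWeakSubdivision G K4 w) (himb : ¬ BalancedWeights w) :
    (∃ H : Multigraph, memG H n (n + 2) ∧
      (∃ w' : K4.E → ℕ, IsWeakSubdivision H K4 w') ∧
      H.d 2 < G.d 2 ∧ H.d 3 < G.d 3) ∧
    (∀ p : ℝ, 0 < p → p < 1 → ¬ pOptimal G n (n + 2) p) := by
  obtain ⟨hw, ⟨φ⟩⟩ := hsub
  obtain ⟨w', hw', hsum, hc2, hc3⟩ := exists_better w hw himb
  have hEG : G.nE = ∑ e, w e := by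
    rw [← nE_subdivide]; exact Fintype.card_congr φ.eMap
  have hEs : ∑ e, w e = n + 2 := hEG ▸ hG.2.1
  have hH : memG (subdivide K4 w') n (n + 2) := by
    refine ⟨?_, ?_, ?_⟩
    · have := nV_subdivide w' hw' cardE
      omega
    · rw [nE_subdivide, hsum, hEs]
    · have h0 := c0 w'
      have : (c (subdivide K4 w') 0) ≠ 0 := by omega
      unfold c at this
      obtain ⟨F, hF⟩ := Finset.card_ne_zero.1 this
      have hF' := (Finset.mem_filter.1 hF).2
      have : F = ∅ := Finset.card_eq_zero.1 hF'.1
      have h3 := hF'.2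
      rw [this, Finset.sdiff_empty] at h3
      exact h3
  have hEH := hH.2.1
  have hEG' := hG.2.1
  have g2 := c_iso φ 2
  have g3 := c_iso φ 3
  refine ⟨⟨subdivide K4 w', hH, ⟨w', hw', ⟨⟨Equiv.refl _, Equiv.refl _, fun e => Or.inl ⟨rfl, rfl⟩⟩⟩⟩, ?_, ?_⟩, ?_⟩
  · have a1 := d_add_c G 2
    have a2 := d_add_c (subdivide K4 w') 2
    rw [hEG'] at a1
    rw [hEH] at a2
    omega
  · have a1 := d_add_c G 3
    have a2 := d_add_c (subdivide K4 w') 3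
    rw [hEG'] at a1
    rw [hEH] at a2
    omega
  · rintro p hp0 hp1 ⟨_, hopt⟩
    have := hopt _ hH
    rw [rel_eq, rel_eq, hEH, hEG'] at this
    refine absurd this (not_le.2 ?_)
    have hpos : ∀ i, 0 < p ^ (n + 2 - i) * (1 - p) ^ i := by
      intro i
      have : 0 < 1 - p := by linarith
      positivity
    apply Finset.sum_lt_sum
    · intro i _
      refine mul_le_mul_of_nonneg_right ?_ (hpos i).le
      rw [c_iso φ i]
      norm_cast
      rcases Nat.lt_or_ge i 4 with hi | hi
      · interval_cases i
        · rw [c0, c0]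
        · rw [c1, c1, hsum]
        · exact hc2.le
        · exact hc3.le
      · rw [c4 w i hi]; omega
    · refine ⟨2, Finset.mem_range.2 (by omega), ?_⟩
      refine mul_lt_mul_of_pos_right ?_ (hpos 2)
      rw [g2]
      exact_mod_cast hc2

end K4aux

/-- an imbalanced weak K₄-subdivision G ∈ 𝒢_{n,n+2} is beaten on d₂ and
d₃ by another weak K₄-subdivision H ∈ 𝒢_{n,n+2}; hence it is not p-optimal for any p. -/
theorem imbalanced_K4_subdivision_not_optimal (n : ℕ) (hn : 1 ≤ n)
    (G : Multigraph) (hG : memG G n (n + 2))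
    (w : K4.E → ℕ) (hsub : IsWeakSubdivision G K4 w) (himb : ¬ BalancedWeights w) :
    (∃ H : Multigraph, memG H n (n + 2) ∧
      (∃ w' : K4.E → ℕ, IsWeakSubdivision H K4 w') ∧
      H.d 2 < G.d 2 ∧ H.d 3 < G.d 3) ∧
    (∀ p : ℝ, 0 < p → p < 1 → ¬ pOptimal G n (n + 2) p) := by
  exact K4aux.main n hn G hG w hsub himb
end
end

section
/- Let G ∈ G_{n,n+2} with n ≥ 1. If G is not a weak subdivision of K₄, then there exists a bridgeless graph H ∈ G_{n,n+2} such that d_2(H) < d_2(G) and d_3(H) < d_3(G). Hence, for every p ∈ (0,1), any p-optimal (n,n+2)-graph is a weak subdivision of K₄. -/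
open Classical Finset

noncomputable section

theorem connOn_iff (G : Multigraph) (S : Finset G.E) :
    G.ConnOn S ↔ ∀ χ : G.V → Bool, (∀ e ∈ S, χ (G.src e) = χ (G.tgt e)) → ∀ u v, χ u = χ v := by
  constructor
  · intro h χ hχ u v
    have := h u v
    induction this with
    | refl => rfl
    | tail _ hs ih =>
      obtain ⟨e, he, h1 | h1⟩ := hs
      · rw [ih, ← h1.1, ← h1.2, hχ e he]
      · rw [ih, ← h1.1, ← h1.2, hχ e he]
  · intro h u v
    have := h (fun x => decide (Relation.ReflTransGen (G.stepOn S) u x)) ?_ u v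
    · have h2 : Relation.ReflTransGen (G.stepOn S) u u := Relation.ReflTransGen.refl
      simpa [h2] using this
    · intro e he
      rw [decide_eq_decide]
      exact ⟨fun h => h.tail ⟨e, he, Or.inl ⟨rfl, rfl⟩⟩, fun h => h.tail ⟨e, he, Or.inr ⟨rfl, rfl⟩⟩⟩

theorem connOn_mono {G : Multigraph} {S T : Finset G.E} (h : S ⊆ T) (hS : G.ConnOn S) : G.ConnOn T := by
  rw [connOn_iff] at *
  exact fun χ hχ => hS χ fun e he => hχ e (h he)

theorem exists_tree {G : Multigraph} {S : Finset G.E} (hS : G.ConnOn S) (hne : 1 ≤ G.nV) :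
    ∃ T ⊆ S, G.ConnOn T ∧ T.card + 1 = G.nV := by
  have hN : Nonempty G.V := Fintype.card_pos_iff.mp hne
  let K : SimpleGraph G.V := SimpleGraph.fromRel (G.stepOn S)
  have hK : K.Connected := by
    rw [SimpleGraph.connected_iff]
    refine ⟨fun u v => ?_, hN⟩
    have := hS u v
    induction this with
    | refl => exact SimpleGraph.Reachable.refl _
    | @tail b c _ hs ih =>
      by_cases hbc : b = c
      · rwa [← hbc]
      · exact ih.trans (SimpleGraph.Adj.reachable (by
          rw [SimpleGraph.fromRel_adj]; exact ⟨hbc, Or.inl hs⟩))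
  obtain ⟨T, hT, hTT⟩ := hK.exists_isTree_le
  have hc := hTT.card_edgeFinset
  have hex : ∀ s ∈ T.edgeFinset, ∃ e ∈ S, s(G.src e, G.tgt e) = s := by
    intro s hs
    induction s with
    | _ u v =>
      have h1 : T.Adj u v := by simpa using hs
      have h2 := hT h1
      rw [SimpleGraph.fromRel_adj] at h2
      obtain ⟨_, ⟨e, he, h | h⟩ | ⟨e, he, h | h⟩⟩ := h2
      all_goals refine ⟨e, he, ?_⟩; rw [h.1, h.2]
      all_goals first | rfl | exact Sym2.eq_swap
  choose f hfS hf using hex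
  refine ⟨T.edgeFinset.attach.image (fun s => f s.1 s.2), ?_, ?_, ?_⟩
  · intro e he
    obtain ⟨s, hs, rfl⟩ := mem_image.mp he
    exact hfS s.1 s.2
  · rw [connOn_iff]
    intro χ hχ u v
    obtain ⟨p⟩ := hTT.connected.preconnected u v
    induction p with
    | nil => rfl
    | @cons u x w h p ih =>
      rw [← ih]
      have hm : s(u,x) ∈ T.edgeFinset := by simpa using h
      have h3 := hχ (f s(u,x) hm) (mem_image.2 ⟨⟨_, hm⟩, mem_attach _ _, rfl⟩)
      have h4 := hf _ hm
      rw [Sym2.eq_iff] at h4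
      obtain h4 | h4 := h4
      · rw [h4.1, h4.2] at h3; exact h3
      · rw [h4.1, h4.2] at h3; exact h3.symm
  · rw [card_image_of_injOn, card_attach, hc]; rfl
    intro s hs t ht hst
    apply Subtype.ext
    have hst' : f s.1 s.2 = f t.1 t.2 := hst
    rw [← hf s.1 s.2, ← hf t.1 t.2, hst']

theorem conn_card {G : Multigraph} {S : Finset G.E} (hS : G.ConnOn S) (hne : 1 ≤ G.nV) :
    G.nV ≤ S.card + 1 := by
  obtain ⟨T, h1, _, h2⟩ := exists_tree hS hne
  have := card_le_card h1
  omega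

/-- number of non-disconnecting sets -/
def nd (G : Multigraph) (i : ℕ) : ℕ :=
  ((Finset.univ : Finset (Finset G.E)).filter fun F => F.card = i ∧ G.ConnOn (univ \ F)).card

theorem nd_add_d (G : Multigraph) (i : ℕ) : nd G i + G.d i = G.nE.choose i := by
  have h1 : (univ.powersetCard i : Finset (Finset G.E)).card = G.nE.choose i := by
    rw [card_powersetCard]; rfl
  rw [← h1, ← card_filter_add_card_filter_not (s := powersetCard i univ) (fun F => G.ConnOn (univ \ F))]
  unfold nd Multigraph.d Multigraph.Disconnects
  congr 2 <;> · ext F; simp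

theorem nd_iso {G H : Multigraph} (h : IsIso G H) (i : ℕ) : nd G i = nd H i := by
  obtain ⟨φ⟩ := h
  have key : ∀ F : Finset G.E, H.ConnOn (univ \ F.map φ.eMap.toEmbedding) ↔ G.ConnOn (univ \ F) := by
    intro F
    rw [connOn_iff, connOn_iff]
    constructor
    · intro h χ hχ u v
      have := h (χ ∘ φ.vMap.symm) ?_ (φ.vMap u) (φ.vMap v)
      · simpa using this
      · intro e he
        obtain ⟨e, rfl⟩ := φ.eMap.surjective e
        have he' : e ∉ F := by simpa using he
        have := hχ e (by simpa using he')
        obtain h | h := φ.ends_eq e <;> simp [h.1, h.2, this]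
    · intro h χ hχ u v
      have := h (χ ∘ φ.vMap) ?_ (φ.vMap.symm u) (φ.vMap.symm v)
      · simpa using this
      · intro e he
        have he' : e ∉ F := by simpa using he
        have := hχ (φ.eMap e) (by simpa using he')
        obtain h | h := φ.ends_eq e
        · simpa [h.1, h.2] using this
        · simpa [h.1, h.2] using this.symm
  unfold nd
  refine card_bij' (fun F _ => F.map φ.eMap.toEmbedding) (fun F _ => F.map φ.eMap.symm.toEmbedding) ?_ ?_ ?_ ?_
  · intro F hF
    simp only [mem_filter, mem_univ, true_and, card_map] at hF ⊢
    exact ⟨hF.1, (key F).2 hF.2⟩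
  · intro F hF
    simp only [mem_filter, mem_univ, true_and, card_map] at hF ⊢
    refine ⟨hF.1, (key _).1 ?_⟩
    rw [map_map]
    convert hF.2
    ext; simp
  · intro F _
    ext; simp
  · intro F _
    ext; simp

theorem filt_lt {α : Type} [Fintype α] {P Q : α → Prop} {_ : DecidablePred P} {_ : DecidablePred Q} (h : ∀ x, P x → Q x) (x : α)
    (hP : ¬ P x) (hQ : Q x) : (univ.filter P).card < (univ.filter Q).card := by
  apply card_lt_card
  rw [ssubset_iff_of_subset]
  · exact ⟨x, by simpa using hQ, by simpa using hP⟩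
  · intro y; simpa using h y

/-- contract `e` and subdivide `a` -/
def moveBridge (G : Multigraph) (e a : G.E) : Multigraph where
  V := G.V
  E := G.E
  src f := if f = e then G.tgt e else (if G.src f = G.tgt e then G.src e else G.src f)
  tgt f := if f = e then (if G.tgt a = G.tgt e then G.src e else G.tgt a)
    else if f = a then G.tgt e else (if G.tgt f = G.tgt e then G.src e else G.tgt f)

theorem bridge_ne {G : Multigraph} (hG : G.Connected) {e : G.E} (he : G.IsBridge e) :
    G.src e ≠ G.tgt e := by
  intro h
  apply he
  unfold Multigraph.Connected at hG
  rw [connOn_iff] at *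
  intro χ hχ
  refine hG χ fun f _ => ?_
  by_cases hf : f = e
  · rw [hf, h]
  · exact hχ f (by simp [hf])

theorem bridge_mem {G : Multigraph} {e : G.E} (he : G.IsBridge e) {S : Finset G.E} (hS : G.ConnOn S) :
    e ∈ S := by
  by_contra h
  refine he (connOn_mono ?_ hS)
  intro f hf
  simp only [mem_sdiff, mem_univ, mem_singleton, true_and]
  rintro rfl
  exact h hf

theorem moveBridge_conn {G : Multigraph} {e a : G.E} (hne : G.src e ≠ G.tgt e) (hae : a ≠ e)
    {S : Finset G.E} (he : e ∈ S) (hS : G.ConnOn S) : (moveBridge G e a).ConnOn S := by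
  rw [connOn_iff] at hS
  refine (connOn_iff (moveBridge G e a) _).2 ?_
  intro (χ : G.V → Bool) hχ
  have hχ : ∀ f ∈ (S : Finset G.E), χ (if f = e then G.tgt e else (if G.src f = G.tgt e then G.src e else G.src f)) =
      χ (if f = e then (if G.tgt a = G.tgt e then G.src e else G.tgt a) else if f = a then G.tgt e else (if G.tgt f = G.tgt e then G.src e else G.tgt f)) := hχ
  have hχe := hχ e he
  simp only [if_true] at hχe
  have key := hS (fun z => χ (if z = G.tgt e then G.src e else z)) (by
    intro f hf
    by_cases h1 : f = e
    · subst h1; simp [hne]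
    · have := hχ f hf
      by_cases h2 : f = a
      · subst h2
        simp only [if_neg h1, if_true] at this
        rw [this, hχe]
      · simpa only [if_neg h1, if_neg h2] using this)
  have hall : ∀ z : G.V, χ z = χ (G.src e) := by
    intro z
    by_cases hz : z = G.tgt e
    · subst hz
      rw [hχe]
      simpa [hne] using key (G.tgt a) (G.src e)
    · simpa [hz, hne] using key z (G.src e)
  intro (u : G.V) (v : G.V)
  rw [hall u, hall v]

theorem moveBridge_conn' {G : Multigraph} {e a : G.E} (hne : G.src e ≠ G.tgt e) (hae : a ≠ e)
    {S : Finset G.E} (ha : a ∉ S) (hS : G.ConnOn S) :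
    (moveBridge G e a).ConnOn (insert a (S.erase e) : Finset G.E) := by
  rw [connOn_iff] at hS
  refine (connOn_iff (moveBridge G e a) _).2 ?_
  intro (χ : G.V → Bool) hχ
  have hχ : ∀ f ∈ (insert a (S.erase e) : Finset G.E), χ (if f = e then G.tgt e else (if G.src f = G.tgt e then G.src e else G.src f)) =
      χ (if f = e then (if G.tgt a = G.tgt e then G.src e else G.tgt a) else if f = a then G.tgt e else (if G.tgt f = G.tgt e then G.src e else G.tgt f)) := hχ
  have hχa := hχ a (mem_insert_self a (S.erase e))
  simp only [if_neg hae, if_true] at hχa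
  have key := hS (fun z => χ (if z = G.tgt e then G.src e else z)) (by
    intro f hf
    by_cases h1 : f = e
    · subst h1; simp [hne]
    · have := hχ f (mem_insert_of_mem (mem_erase.2 ⟨h1, hf⟩))
      have h2 : f ≠ a := by rintro rfl; exact ha hf
      simpa only [if_neg h1, if_neg h2] using this)
  have hall : ∀ z : G.V, χ z = χ (G.src e) := by
    intro z
    by_cases hz : z = G.tgt e
    · subst hz
      rw [← hχa]
      simpa [hne] using key (G.src a) (G.src e)
    · simpa [hz, hne] using key z (G.src e)
  intro (u : G.V) (v : G.V)
  rw [hall u, hall v]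

theorem bridge_improve {n : ℕ} (hn : 1 ≤ n) {G : Multigraph} (hG : memG G n (n+2))
    (hb : ¬ G.Bridgeless) :
    ∃ H, memG H n (n+2) ∧ nd G 2 < nd H 2 ∧ nd G 3 < nd H 3 := by
  obtain ⟨hV, hE, hC⟩ := hG
  simp only [Multigraph.Bridgeless, not_forall, not_not] at hb
  obtain ⟨e, he⟩ := hb
  have hne := bridge_ne hC he
  obtain ⟨T, -, hT, hTc⟩ := exists_tree hC (by omega)
  have heT := bridge_mem he hT
  have h3 : (univ \ T).card = 3 := by
    have h := card_sdiff_add_card_eq_card (subset_univ T)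
    have : (univ : Finset G.E).card = n + 2 := hE
    omega
  obtain ⟨a, x, y, hax, hay, hxy, hF⟩ := card_eq_three.mp h3
  have hmem : ∀ f, f ∉ T ↔ f = a ∨ f = x ∨ f = y := by
    intro f
    have : f ∈ univ \ T ↔ f ∈ ({a,x,y} : Finset G.E) := by rw [hF]
    simpa using this
  have haT : a ∉ T := (hmem a).2 (by simp)
  have hxT : x ∉ T := (hmem x).2 (by simp)
  have hyT : y ∉ T := (hmem y).2 (by simp)
  have hae : a ≠ e := by rintro rfl; exact haT heT
  have hxe : x ≠ e := by rintro rfl; exact hxT heT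
  have hye : y ≠ e := by rintro rfl; exact hyT heT
  have key := moveBridge_conn' hne hae haT hT
  have main : ∀ i (F : Finset G.E), F.card = i → e ∈ F → F ⊆ {e, x, y} →
      nd G i < nd (moveBridge G e a) i := by
    intro i F hi heF hFs
    unfold nd
    refine filt_lt (α := Finset G.E) ?_ F ?_ ?_
    · rintro F ⟨h1, h2⟩
      exact ⟨h1, moveBridge_conn hne hae (bridge_mem he h2) h2⟩
    · rintro ⟨_, h⟩
      have := bridge_mem he h
      simp [heF] at this
    · refine ⟨hi, connOn_mono ?_ key⟩
      intro (f : G.E) (hf : f ∈ insert a (T.erase e))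
      have hfF : f ∉ ({e, x, y} : Finset G.E) := by
        simp only [mem_insert, mem_singleton, mem_erase] at hf ⊢
        rintro (h | h | h)
        · subst h; exact hf.elim (fun h => hae h.symm) (fun h => h.1 rfl)
        · subst h; exact hf.elim (fun h => hax h.symm) (fun h => hxT h.2)
        · subst h; exact hf.elim (fun h => hay h.symm) (fun h => hyT h.2)
      exact mem_sdiff.2 ⟨mem_univ _, fun h => hfF (hFs h)⟩
  refine ⟨moveBridge G e a, ⟨hV, hE, moveBridge_conn hne hae (mem_univ e) hC⟩, ?_, ?_⟩
  · exact main 2 {e, x} (card_pair hxe.symm) (by simp) (by intro f; simp; tauto)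
  · exact main 3 {e, x, y} (card_eq_three.2 ⟨e, x, y, hxe.symm, hye.symm, hxy, rfl⟩) (by simp) (by simp)

theorem rel_eq (G : Multigraph) (p : ℝ) :
    G.rel p = ∑ i ∈ range (G.nE + 1), (nd G i : ℝ) * (p ^ (G.nE - i) * (1 - p) ^ i) := by
  have hle : ∀ F : Finset G.E, F.card ≤ G.nE := fun F => card_le_univ F
  have h1 : G.rel p = ∑ F : Finset G.E, if G.ConnOn (univ \ F) then
      p ^ (G.nE - F.card) * (1 - p) ^ F.card else 0 := by
    unfold Multigraph.rel
    refine Fintype.sum_equiv (Function.Involutive.toPerm (compl : Finset G.E → Finset G.E) compl_involutive) _ _ ?_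
    intro S
    have hc : (Sᶜ).card = G.nE - S.card := card_compl S
    have hs : univ \ Sᶜ = S := by ext; simp
    simp only [Function.Involutive.coe_toPerm, hs, hc, Nat.sub_sub_self (hle S)]
  rw [h1]
  rw [← sum_fiberwise_of_maps_to (s := univ) (t := range (G.nE + 1)) (g := fun F => F.card)
    (fun F _ => mem_range.2 (Nat.lt_succ_of_le (hle F)))]
  refine sum_congr rfl fun i _ => ?_
  unfold nd
  rw [← sum_filter, filter_filter, ← nsmul_eq_mul, ← sum_const]
  refine sum_congr rfl fun F hF => ?_
  rw [(mem_filter.1 hF).2.1]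

theorem nd_ge_four {n : ℕ} (hn : 1 ≤ n) {G : Multigraph} (hG : memG G n (n+2)) {i : ℕ} (hi : 4 ≤ i) :
    nd G i = 0 := by
  obtain ⟨hV, hE, hC⟩ := hG
  unfold nd
  rw [card_eq_zero, filter_eq_empty_iff]
  rintro F - ⟨hF, hc⟩
  have := conn_card hc (by omega)
  have h := card_sdiff_add_card_eq_card (subset_univ F)
  have : (univ : Finset G.E).card = n + 2 := hE
  omega

theorem rel_lt {n : ℕ} (hn : 1 ≤ n) {G H : Multigraph} (hG : memG G n (n+2)) (hH : memG H n (n+2))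
    (hB : H.Bridgeless) (h2 : nd G 2 < nd H 2) (h3 : nd G 3 < nd H 3) {p : ℝ} (h0 : 0 < p)
    (h1 : p < 1) : G.rel p < H.rel p := by
  rw [rel_eq, rel_eq, hG.2.1, hH.2.1]
  have hq : 0 < 1 - p := by linarith
  have hpos : ∀ i, 0 < p ^ (n + 2 - i) * (1 - p) ^ i := fun i => by positivity
  have hd0 : H.d 1 = 0 := by
    unfold Multigraph.d
    rw [card_eq_zero, filter_eq_empty_iff]
    rintro F - ⟨hF, hc⟩
    obtain ⟨e, rfl⟩ := card_eq_one.1 hF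
    exact hB e hc
  have hd00 : H.d 0 = 0 := by
    unfold Multigraph.d
    rw [card_eq_zero, filter_eq_empty_iff]
    rintro F - ⟨hF, hc⟩
    rw [card_eq_zero] at hF
    subst hF
    apply hc
    rw [sdiff_empty]
    exact hH.2.2
  apply sum_lt_sum
  · intro i hi
    apply mul_le_mul_of_nonneg_right _ (hpos i).le
    norm_cast
    have hg := nd_add_d G i
    have hh := nd_add_d H i
    rw [hG.2.1] at hg
    rw [hH.2.1] at hh
    by_cases h4 : 4 ≤ i
    · rw [nd_ge_four hn hG h4]; exact Nat.zero_le _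
    · interval_cases i <;> omega
  · refine ⟨2, by simp, ?_⟩
    apply mul_lt_mul_of_pos_right _ (hpos 2)
    exact_mod_cast h2

theorem node_zero (D : Multigraph) (w : D.E → ℕ) (e : D.E) :
    chainNode D w e 0 = Sum.inl (Quot.mk _ (D.src e)) := by
  simp [chainNode]

theorem node_end (D : Multigraph) (w : D.E → ℕ) (e : D.E) :
    chainNode D w e (w e) = Sum.inl (Quot.mk _ (D.tgt e)) := by
  by_cases h : w e = 0
  · rw [h, node_zero]
    congr 1
    exact Quot.sound ⟨e, h, rfl, rfl⟩
  · simp [chainNode, h]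

theorem node_mid (D : Multigraph) (w : D.E → ℕ) (e : D.E) (k : Fin (w e - 1)) :
    chainNode D w e (k.val + 1) = Sum.inr ⟨e, k⟩ := by
  have := k.2
  simp [chainNode, show k.val + 1 < w e by omega]

/-- evaluate a function on nodes -/
theorem node_eval (D : Multigraph) (w : D.E → ℕ) (X : Quot (zeroRel D w) ⊕ (Σ f : D.E, Fin (w f - 1)) → Bool)
    (g : D.E → ℕ → Bool) (h0 : ∀ e, X (Sum.inl (Quot.mk _ (D.src e))) = g e 0)
    (h1 : ∀ e, X (Sum.inl (Quot.mk _ (D.tgt e))) = g e (w e))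
    (h2 : ∀ e (k : Fin (w e - 1)), X (Sum.inr ⟨e, k⟩) = g e (k.val + 1)) (e : D.E) (k : ℕ) (hk : k ≤ w e) :
    X (chainNode D w e k) = g e k := by
  rcases Nat.eq_zero_or_pos k with rfl | hk0
  · rw [node_zero, h0]
  · rcases Nat.eq_or_lt_of_le hk with rfl | hk1
    · rw [node_end, h1]
    · have := node_mid D w e ⟨k - 1, by omega⟩
      simp only [Nat.sub_add_cancel hk0] at this
      rw [this, h2]
      simp only [Nat.sub_add_cancel hk0]

theorem sub_conn_iff (D : Multigraph) (w : D.E → ℕ) (F : Finset (Σ f : D.E, Fin (w f)))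
    (S : Finset (subdivide D w).E) (hS : ∀ x : (Σ f : D.E, Fin (w f)), x ∈ S ↔ x ∉ F) :
    (subdivide D w).ConnOn S ↔
    (∀ x ∈ F, ∀ y ∈ F, x.1 = y.1 → x = y) ∧ D.ConnOn (univ \ F.image Sigma.fst) := by
  have hsub : (subdivide D w).ConnOn S ↔
      ∀ X : Quot (zeroRel D w) ⊕ (Σ f : D.E, Fin (w f - 1)) → Bool,
        (∀ e (k : Fin (w e)), (⟨e, k⟩ : Σ f : D.E, Fin (w f)) ∉ F →
          X (chainNode D w e k.val) = X (chainNode D w e (k.val + 1))) → ∀ u v, X u = X v := by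
    refine (connOn_iff (subdivide D w) _).trans ?_
    constructor
    · intro h X hX
      refine h X ?_
      rintro ⟨e, k⟩ he
      exact hX e k ((hS _).1 he)
    · intro h X hX
      refine h X ?_
      intro e k hek
      exact hX ⟨e, k⟩ ((hS _).2 hek)
  rw [hsub, connOn_iff]
  constructor
  · intro h
    constructor
    · by_contra hcon
      have : ∃ e, ∃ i j : Fin (w e), i < j ∧ (⟨e, i⟩ : Σ f : D.E, Fin (w f)) ∈ F ∧
          (⟨e, j⟩ : Σ f : D.E, Fin (w f)) ∈ F := by
        push Not at hcon
        obtain ⟨⟨e, i⟩, hi, ⟨e', j⟩, hj, rfl, hne⟩ := hcon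
        have hij : i ≠ j := by rintro rfl; exact hne rfl
        rcases lt_or_gt_of_ne hij with h | h
        · exact ⟨_, i, j, h, hi, hj⟩
        · exact ⟨_, j, i, h, hj, hi⟩
      obtain ⟨e, i, j, hij, hi, hj⟩ := this
      have hij' : i.val < j.val := hij
      have hjw := j.2
      let X : Quot (zeroRel D w) ⊕ (Σ f : D.E, Fin (w f - 1)) → Bool := fun x => match x with
        | Sum.inl _ => false
        | Sum.inr ⟨f, k⟩ => decide (f = e ∧ i.val < k.val + 1 ∧ k.val + 1 ≤ j.val)
      have hX := node_eval D w X (fun f k => decide (f = e ∧ i.val < k ∧ k ≤ j.val))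
        (by intro f; simp [X]) (by
          intro f; simp only [X]; symm; rw [decide_eq_false_iff_not]
          rintro ⟨rfl, h1, h2⟩; omega) (by intro f k; rfl)
      have := h X (by
        intro f k hk
        rw [hX f _ k.2.le, hX f _ k.2, decide_eq_decide]
        have : f = e → k.val ≠ i.val ∧ k.val ≠ j.val := by
          rintro rfl
          constructor
          · intro hh; exact hk (by rw [Fin.ext hh]; exact hi)
          · intro hh; exact hk (by rw [Fin.ext hh]; exact hj)
        constructor
        · rintro ⟨h1, h2, h3⟩; have := this h1; exact ⟨h1, by omega, by omega⟩
        · rintro ⟨h1, h2, h3⟩; have := this h1; exact ⟨h1, by omega, by omega⟩)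
        (chainNode D w e 0) (chainNode D w e (i.val + 1))
      rw [hX e 0 (by omega), hX e _ (by omega), decide_eq_decide] at this
      have := this.2 ⟨rfl, by omega, by omega⟩
      omega
    · intro χ hχ
      let g : D.E → ℕ → Bool := fun e k =>
        if ∃ i : Fin (w e), (⟨e, i⟩ : Σ f : D.E, Fin (w f)) ∈ F ∧ i.val < k then χ (D.tgt e) else χ (D.src e)
      let X : Quot (zeroRel D w) ⊕ (Σ f : D.E, Fin (w f - 1)) → Bool := fun x => match x with
        | Sum.inl q => Quot.lift χ (by
            rintro a b ⟨e, he, rfl, rfl⟩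
            apply hχ
            simp only [mem_sdiff, mem_univ, mem_image, true_and]
            rintro ⟨⟨e', k⟩, -, rfl⟩
            have := k.2
            simp only at he
            omega) q
        | Sum.inr ⟨f, k⟩ => g f (k.val + 1)
      have hX := node_eval D w X g (by intro e; simp [X, g]) (by
          intro e
          simp only [X, g]
          split_ifs with h
          · rfl
          · symm
            apply hχ
            simp only [mem_sdiff, mem_univ, mem_image, true_and]
            rintro ⟨⟨e', k⟩, hk, rfl⟩
            exact h ⟨k, hk, k.2⟩) (by intro f k; rfl)
      have := h X (by
        intro f k hk
        rw [hX f _ k.2.le, hX f _ k.2]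
        simp only [g]
        have : (∃ i : Fin (w f), (⟨f, i⟩ : Σ f : D.E, Fin (w f)) ∈ F ∧ i.val < k.val) ↔
            (∃ i : Fin (w f), (⟨f, i⟩ : Σ f : D.E, Fin (w f)) ∈ F ∧ i.val < k.val + 1) := by
          constructor
          · rintro ⟨i, h1, h2⟩; exact ⟨i, h1, by omega⟩
          · rintro ⟨i, h1, h2⟩
            refine ⟨i, h1, ?_⟩
            have : i.val ≠ k.val := fun hh => hk (by rw [← Fin.ext hh]; exact h1)
            omega
        simp only [this])
      intro u v
      exact this (Sum.inl (Quot.mk _ u)) (Sum.inl (Quot.mk _ v))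
  · rintro ⟨hinj, hconn⟩ X hX
    have hseg : ∀ e a b, a ≤ b → b ≤ w e → (∀ k : Fin (w e), a ≤ k.val → k.val < b →
        (⟨e, k⟩ : Σ f : D.E, Fin (w f)) ∉ F) → X (chainNode D w e a) = X (chainNode D w e b) := by
      intro e a b hab
      induction b, hab using Nat.le_induction with
      | base => intros; rfl
      | succ b hab ih =>
        intro hb hF
        rw [ih (by omega) (fun k h1 h2 => hF k h1 (by omega))]
        exact hX e ⟨b, hb⟩ (hF ⟨b, hb⟩ hab (by simp))
    have hD := hconn (fun v => X (Sum.inl (Quot.mk _ v))) (by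
      intro e he
      have := hseg e 0 (w e) (by omega) le_rfl (by
        intro k _ _ hk
        simp only [mem_sdiff, mem_univ, true_and, mem_image, not_exists, not_and] at he
        exact he _ hk rfl)
      rwa [node_zero, node_end] at this)
    have hmid : ∀ e k, k ≤ w e → ∃ v, X (chainNode D w e k) = X (Sum.inl (Quot.mk _ v)) := by
      intro e k hk
      by_cases h : ∃ i : Fin (w e), (⟨e, i⟩ : Σ f : D.E, Fin (w f)) ∈ F ∧ i.val < k
      · obtain ⟨i, hi, hik⟩ := h
        refine ⟨D.tgt e, ?_⟩
        rw [← node_end]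
        apply hseg e k (w e) hk le_rfl
        intro k' h1 h2 h3
        have := hinj _ hi _ h3 rfl
        simp only [Sigma.mk.injEq, heq_eq_eq, true_and] at this
        subst this
        omega
      · refine ⟨D.src e, ?_⟩
        rw [← node_zero]
        symm
        apply hseg e 0 k (by omega) hk
        intro k' h1 h2 h3
        exact h ⟨k', h3, h2⟩
    have hall : ∀ x, ∃ v, X x = X (Sum.inl (Quot.mk _ v)) := by
      rintro (q | ⟨e, k⟩)
      · induction q using Quot.ind with
        | _ v => exact ⟨v, rfl⟩
      · have := hmid e (k.val + 1) (by have := k.2; omega)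
        rwa [node_mid] at this
    intro x y
    obtain ⟨u, hu⟩ := hall x
    obtain ⟨v, hv⟩ := hall y
    rw [hu, hv]
    exact hD u v

theorem mem_co {α : Type} {_ : Fintype α} {_ : DecidableEq α} (F : Finset α) (x : α) :
    x ∈ univ \ F ↔ x ∉ F := by simp

theorem card_filter_congr' {α : Type} {i1 i2 : Fintype α} {P Q : α → Prop} {_ : DecidablePred P}
    {_ : DecidablePred Q} (h : ∀ x, P x ↔ Q x) :
    (filter P (@univ α i1)).card = (filter Q (@univ α i2)).card := by
  congr 1
  ext x
  simp [h]

theorem card_transversal {E : Type} [Fintype E] (w : E → ℕ) (T : Finset E) :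
    (univ.filter fun F : Finset (Σ f : E, Fin (w f)) =>
      (∀ x ∈ F, ∀ y ∈ F, x.1 = y.1 → x = y) ∧ F.image Sigma.fst = T).card = ∏ t ∈ T, w t := by
  have h : (T.pi (fun t => (univ : Finset (Fin (w t))))).card = ∏ t ∈ T, w t := by
    simp [card_pi]
  rw [← h]
  symm
  refine card_bij (fun f _ => T.attach.image (fun t => (⟨t.1, f t.1 t.2⟩ : Σ f : E, Fin (w f)))) ?_ ?_ ?_
  · intro f _
    simp only [mem_filter, mem_univ, true_and]
    constructor
    · intro x hx y hy hxy
      simp only [mem_image, mem_attach, true_and, Subtype.exists] at hx hy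
      obtain ⟨a, ha, rfl⟩ := hx
      obtain ⟨b, hb, rfl⟩ := hy
      simp only at hxy
      subst hxy
      rfl
    · ext t
      simp only [mem_image, mem_attach, true_and, Subtype.exists]
      constructor
      · rintro ⟨_, ⟨a, ha, rfl⟩, rfl⟩; exact ha
      · intro ht; exact ⟨_, ⟨t, ht, rfl⟩, rfl⟩
  · intro f _ g _ hfg
    funext t ht
    have h1 : (⟨t, f t ht⟩ : Σ f : E, Fin (w f)) ∈
        T.attach.image (fun t => (⟨t.1, g t.1 t.2⟩ : Σ f : E, Fin (w f))) := by
      rw [← hfg]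
      exact mem_image.2 ⟨⟨t, ht⟩, mem_attach _ _, rfl⟩
    simp only [mem_image, mem_attach, true_and, Subtype.exists] at h1
    obtain ⟨a, ha, hh⟩ := h1
    simp only [Sigma.mk.injEq] at hh
    obtain ⟨rfl, h2⟩ := hh
    exact (eq_of_heq h2).symm
  · intro F hF
    simp only [mem_filter, mem_univ, true_and] at hF
    obtain ⟨hinj, rfl⟩ := hF
    have hex : ∀ t ∈ F.image Sigma.fst, ∃ k : Fin (w t), (⟨t, k⟩ : Σ f : E, Fin (w f)) ∈ F := by
      intro t ht
      obtain ⟨⟨t', k⟩, h1, rfl⟩ := mem_image.1 ht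
      exact ⟨k, h1⟩
    choose f hf using hex
    refine ⟨f, by simp, ?_⟩
    ext x
    simp only [mem_image, mem_attach, true_and, Subtype.exists]
    constructor
    · rintro ⟨a, ha, rfl⟩; exact hf a _
    · intro hx
      refine ⟨x.1, ⟨x, hx, rfl⟩, ?_⟩
      exact hinj _ (hf _ _) _ hx rfl

theorem nd_sub (D : Multigraph) (w : D.E → ℕ) (i : ℕ) :
    nd (subdivide D w) i =
      ∑ T ∈ univ.filter (fun T : Finset D.E => T.card = i ∧ D.ConnOn (univ \ T)), ∏ t ∈ T, w t := by
  simp_rw [← card_transversal w]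
  have h1 : nd (subdivide D w) i = (univ.filter fun F : Finset (Σ f : D.E, Fin (w f)) =>
      F.card = i ∧ (∀ x ∈ F, ∀ y ∈ F, x.1 = y.1 → x = y) ∧ D.ConnOn (univ \ F.image Sigma.fst)).card := by
    unfold nd
    have : ∀ F : Finset (subdivide D w).E, (F.card = i ∧ (subdivide D w).ConnOn (univ \ F)) ↔
        ((F : Finset (Σ f : D.E, Fin (w f))).card = i ∧
        (∀ x ∈ (F : Finset (Σ f : D.E, Fin (w f))), ∀ y ∈ (F : Finset (Σ f : D.E, Fin (w f))),
          x.1 = y.1 → x = y) ∧ D.ConnOn (univ \ (F : Finset (Σ f : D.E, Fin (w f))).image Sigma.fst)) := by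
      intro F
      refine and_congr Iff.rfl (sub_conn_iff D w F _ ?_)
      intro x
      exact mem_co (α := (subdivide D w).E) F x
    exact card_filter_congr' (α := Finset (Σ f : D.E, Fin (w f))) this
  rw [h1]
  rw [card_eq_sum_card_fiberwise (f := fun F => F.image Sigma.fst)
    (t := univ.filter (fun T : Finset D.E => T.card = i ∧ D.ConnOn (univ \ T)))]
  · refine sum_congr rfl fun T hT => ?_
    rw [filter_filter]
    congr 1
    ext F
    simp only [mem_filter, mem_univ, true_and] at hT ⊢
    constructor
    · rintro ⟨⟨h1, h2, h3⟩, h4⟩; exact ⟨h2, h4⟩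
    · rintro ⟨h2, rfl⟩
      refine ⟨⟨?_, h2, hT.2⟩, rfl⟩
      rw [← hT.1, card_image_of_injOn]
      intro x hx y hy; exact h2 x hx y hy
  · intro F hF
    simp only [coe_filter, mem_univ, true_and, Set.mem_ofPred_eq] at hF ⊢
    refine ⟨?_, hF.2.2⟩
    rw [card_image_of_injOn, hF.1]
    intro x hx y hy; exact hF.2.1 x hx y hy

theorem sub_nE (D : Multigraph) (w : D.E → ℕ) : (subdivide D w).nE = ∑ e, w e := by
  have : (subdivide D w).nE = Fintype.card (Σ f : D.E, Fin (w f)) := Fintype.card_congr (Equiv.refl _)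
  rw [this]
  simp

theorem sub_nV (D : Multigraph) (w : D.E → ℕ) :
    (subdivide D w).nV + D.nE = Fintype.card (Quot (zeroRel D w)) +
      (univ.filter fun e : D.E => w e = 0).card + ∑ e, w e := by
  have : (subdivide D w).nV = Fintype.card (Quot (zeroRel D w) ⊕ (Σ f : D.E, Fin (w f - 1))) :=
    Fintype.card_congr (Equiv.refl _)
  rw [this]
  have h1 : ∑ e, (w e - 1) + D.nE = (univ.filter fun e : D.E => w e = 0).card + ∑ e, w e := by
    have : D.nE = ∑ e : D.E, 1 := by simp [Multigraph.nE]
    rw [this, card_filter, ← sum_add_distrib, ← sum_add_distrib]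
    refine sum_congr rfl fun e _ => ?_
    split_ifs <;> omega
  simp only [Fintype.card_sum, Fintype.card_sigma, Fintype.card_fin]
  omega

def Joins (G : Multigraph) (e : G.E) (u x : G.V) : Prop :=
  (G.src e = u ∧ G.tgt e = x) ∨ (G.src e = x ∧ G.tgt e = u)

inductive IsWalk (G : Multigraph) : G.V → G.V → List G.E → Prop
  | nil (u : G.V) : IsWalk G u u []
  | cons {u x v : G.V} {e : G.E} {l : List G.E} (h : Joins G e u x) (hw : IsWalk G x v l) :
      IsWalk G u v (e :: l)

theorem walk_nodes {G : Multigraph} {u v : G.V} {l : List G.E} (h : IsWalk G u v l) :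
    ∃ f : ℕ → G.V, f 0 = u ∧ f l.length = v ∧ ∀ i (hi : i < l.length), Joins G l[i] (f i) (f (i+1)) := by
  induction h with
  | nil u => exact ⟨fun _ => u, rfl, rfl, by simp⟩
  | @cons u x v e l h hw ih =>
    obtain ⟨f, h0, h1, h2⟩ := ih
    refine ⟨fun i => if i = 0 then u else f (i - 1), by simp, by simp [h1], ?_⟩
    intro i hi
    rcases i with _ | i
    · simpa [h0] using h
    · simpa using h2 i (by simpa using hi)

theorem walk_nil {G : Multigraph} {u v : G.V} (h : IsWalk G u v []) : u = v := by
  cases h; rfl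

theorem incident {G : Multigraph} (hG : G.Connected) (hE : 1 ≤ G.nE) (v : G.V) :
    ∃ e, G.src e = v ∨ G.tgt e = v := by
  by_contra hcon
  push Not at hcon
  have h := (connOn_iff G univ).1 hG (fun x => decide (x = v)) (by
    intro e _
    simp [hcon e])
  obtain ⟨e⟩ := Fintype.card_pos_iff.mp hE
  have := h (G.src e) v
  simp [hcon e] at this

theorem node_eval' {α : Type} (D : Multigraph) (w : D.E → ℕ) (X : Quot (zeroRel D w) ⊕ (Σ f : D.E, Fin (w f - 1)) → α)
    (g : D.E → ℕ → α) (h0 : ∀ e, X (Sum.inl (Quot.mk _ (D.src e))) = g e 0)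
    (h1 : ∀ e, X (Sum.inl (Quot.mk _ (D.tgt e))) = g e (w e))
    (h2 : ∀ e (k : Fin (w e - 1)), X (Sum.inr ⟨e, k⟩) = g e (k.val + 1)) (e : D.E) (k : ℕ) (hk : k ≤ w e) :
    X (chainNode D w e k) = g e k := by
  rcases Nat.eq_zero_or_pos k with rfl | hk0
  · rw [node_zero, h0]
  · rcases Nat.eq_or_lt_of_le hk with rfl | hk1
    · rw [node_end, h1]
    · have := node_mid D w e ⟨k - 1, by omega⟩
      simp only [Nat.sub_add_cancel hk0] at this
      rw [this, h2]
      simp only [Nat.sub_add_cancel hk0]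

theorem model {n : ℕ} {G D : Multigraph} (hG : memG G n (n+2)) (hD : D.nE = D.nV + 2)
    (L : D.E → List G.E) (b : D.V → G.V) (hL : ∀ e, IsWalk G (b (D.src e)) (b (D.tgt e)) (L e))
    (hnd : ∀ e, (L e).Nodup) (hdis : ∀ e f, e ≠ f → ∀ x, x ∈ L e → x ∉ L f)
    (hcov : ∀ x, ∃ e, x ∈ L e)
    (hq : Fintype.card (Quot (zeroRel D (fun e => (L e).length))) +
      (univ.filter fun e : D.E => (L e).length = 0).card ≤ D.nV) :
    IsWeakSubdivision G D (fun e => (L e).length) := by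
  obtain ⟨hV, hE, hC⟩ := hG
  let w : D.E → ℕ := fun e => (L e).length
  choose f hf0 hf1 hf2 using fun e => walk_nodes (hL e)
  let φE : (Σ e : D.E, Fin (w e)) → G.E := fun x => (L x.1)[x.2.val]'(x.2.2)
  have hφE : Function.Bijective φE := by
    constructor
    · rintro ⟨e, i⟩ ⟨e', j⟩ hij
      simp only [φE] at hij
      have : e = e' := by
        by_contra hne
        exact hdis e e' hne _ (List.getElem_mem i.2) (by rw [hij]; exact List.getElem_mem j.2)
      subst this
      have := (List.Nodup.getElem_inj_iff (hnd e)).1 hij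
      rw [Fin.ext this]
    · intro x
      obtain ⟨e, he⟩ := hcov x
      obtain ⟨i, hi, rfl⟩ := List.mem_iff_getElem.1 he
      exact ⟨⟨e, ⟨i, hi⟩⟩, rfl⟩
  let φV : Quot (zeroRel D w) ⊕ (Σ f : D.E, Fin (w f - 1)) → G.V := fun x => match x with
    | Sum.inl q => Quot.lift b (by
        rintro x y ⟨e, he, rfl, rfl⟩
        have h1 : L e = [] := List.length_eq_zero_iff.1 he
        have h2 := hL e
        rw [h1] at h2
        exact walk_nil h2) q
    | Sum.inr ⟨e, k⟩ => f e (k.val + 1)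
  have hφ := node_eval' D w φV f (by intro e; simp [φV, hf0]) (by intro e; simp [φV, w, hf1])
    (by intro e k; rfl)
  have hj : ∀ e (k : Fin (w e)), Joins G (φE ⟨e, k⟩) (φV (chainNode D w e k.val)) (φV (chainNode D w e (k.val+1))) := by
    intro e k
    rw [hφ e _ k.2.le, hφ e _ k.2]
    exact hf2 e k.val k.2
  have hsurj : Function.Surjective φV := by
    intro v
    obtain ⟨x, hx⟩ := incident hC (by omega) v
    obtain ⟨⟨e, k⟩, rfl⟩ := hφE.2 x
    rcases hj e k with ⟨h1, h2⟩ | ⟨h1, h2⟩ <;> rcases hx with h | h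
    · exact ⟨_, h1.symm.trans h⟩
    · exact ⟨_, h2.symm.trans h⟩
    · exact ⟨_, h1.symm.trans h⟩
    · exact ⟨_, h2.symm.trans h⟩
  have hcE : ∑ e, w e = n + 2 := by
    rw [← hE, ← sub_nE]
    exact Fintype.card_congr (Equiv.ofBijective φE hφE)
  have hc1 := sub_nV D w
  have hc2 : G.nV ≤ (subdivide D w).nV := by
    exact Fintype.card_le_of_surjective φV hsurj
  have hq' : Fintype.card (Quot (zeroRel D w)) + (univ.filter fun e : D.E => w e = 0).card ≤ D.nV := hq
  have hbij : Function.Bijective φV := by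
    rw [Fintype.bijective_iff_surjective_and_card]
    refine ⟨hsurj, ?_⟩
    have : (subdivide D w).nV = G.nV := by omega
    exact (Fintype.card_congr (Equiv.refl _)).trans this
  refine ⟨?_, ⟨⟨(Equiv.ofBijective φV hbij).symm, (Equiv.ofBijective φE hφE).symm, ?_⟩⟩⟩
  · change Fintype.card (Quot (zeroRel D w)) + (univ.filter fun e : D.E => w e = 0).card = D.nV
    omega
  · intro x
    obtain ⟨⟨e, k⟩, rfl⟩ := hφE.2 x
    have h1 : (Equiv.ofBijective φE hφE).symm (φE ⟨e, k⟩) = ⟨e, k⟩ := (Equiv.ofBijective φE hφE).symm_apply_apply ⟨e, k⟩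
    have h2 : ∀ z, (Equiv.ofBijective φV hbij).symm (φV z) = z := (Equiv.ofBijective φV hbij).symm_apply_apply
    have h3 := hj e k
    rcases h3 with h3 | h3
    · left
      rw [h3.1, h3.2]
      erw [h1, h2, h2]
      exact ⟨rfl, rfl⟩
    · right
      rw [h3.1, h3.2]
      erw [h1, h2, h2]
      exact ⟨rfl, rfl⟩

theorem quot_lower (D : Multigraph) (w : D.E → ℕ) (hD : D.Connected) (hV : 1 ≤ D.nV) :
    D.nV ≤ Fintype.card (Quot (zeroRel D w)) + (univ.filter fun e : D.E => w e = 0).card := by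
  let Q : Multigraph := { V := Quot (zeroRel D w), E := D.E, src := fun e => Quot.mk _ (D.src e), tgt := fun e => Quot.mk _ (D.tgt e) }
  have hQ : Q.Connected := by
    refine (connOn_iff Q _).2 ?_
    intro χ hχ
    have := (connOn_iff D _).1 hD (fun v => χ (Quot.mk _ v)) (fun e _ => hχ e (mem_univ e))
    intro u v
    induction u using Quot.ind
    induction v using Quot.ind
    exact this _ _
  obtain ⟨v⟩ := Fintype.card_pos_iff.mp hV
  have hQV : 1 ≤ Q.nV := Fintype.card_pos_iff.mpr ⟨Quot.mk _ v⟩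
  obtain ⟨T, -, hT, hc⟩ := exists_tree hQ hQV
  have hT' : Finset D.E := T
  have key : D.ConnOn ((univ.filter fun e : D.E => w e = 0) ∪ (T : Finset D.E)) := by
    rw [connOn_iff]
    intro χ hχ
    have h := (connOn_iff Q T).1 hT (Quot.lift χ (by
      rintro x y ⟨e, he, rfl, rfl⟩
      exact hχ e (mem_union_left _ (by simpa using he)))) (by
      intro e he
      exact hχ e (mem_union_right _ he))
    intro u v
    exact h (Quot.mk _ u) (Quot.mk _ v)
  have h1 := conn_card key hV
  have h2 := card_union_le (univ.filter fun e : D.E => w e = 0) (T : Finset D.E)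
  have h3 : Q.nV = Fintype.card (Quot (zeroRel D w)) := rfl
  have h4 : (T : Finset D.E).card + 1 = Q.nV := hc
  omega

def labStep (s t : Fin 6 → Fin 4) (z : Fin 6 → Bool) (lab : Fin 4 → Fin 4) (e : Fin 6) : Fin 4 → Fin 4 :=
  if z e then (fun v => if lab v = lab (t e) then lab (s e) else lab v) else lab

def labF (s t : Fin 6 → Fin 4) (z : Fin 6 → Bool) : Fin 4 → Fin 4 :=
  [0,1,2,3,4,5].foldl (labStep s t z) id

theorem quot_upper (D : Multigraph) (w : D.E → ℕ) (ι : Fin 4 → D.V) (hι : Function.Surjective ι)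
    (ε : Fin 6 ≃ D.E) (s t : Fin 6 → Fin 4) (hs : ∀ i, D.src (ε i) = ι (s i))
    (ht : ∀ i, D.tgt (ε i) = ι (t i)) (z : Fin 6 → Bool) (hz : ∀ i, z i = true ↔ w (ε i) = 0)
    (hcheck : (univ.image (labF s t z)).card + (univ.filter fun i => z i = true).card ≤ 4) :
    Fintype.card (Quot (zeroRel D w)) + (univ.filter fun e : D.E => w e = 0).card ≤ 4 := by
  have hinv : ∀ (l : List (Fin 6)) (lab : Fin 4 → Fin 4),
      (∀ v, Quot.mk (zeroRel D w) (ι (lab v)) = Quot.mk _ (ι v)) →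
      ∀ v, Quot.mk (zeroRel D w) (ι (l.foldl (labStep s t z) lab v)) = Quot.mk _ (ι v) := by
    intro l
    induction l with
    | nil => intro lab h; exact h
    | cons e l ih =>
      intro lab h
      apply ih
      intro v
      unfold labStep
      split_ifs with h1
      · simp only
        split_ifs with h2
        · rw [h, ← hs, ← h v, h2, h, ← ht]
          exact Quot.sound ⟨ε e, (hz e).1 h1, rfl, rfl⟩
        · exact h v
      · exact h v
  have hl := hinv [0,1,2,3,4,5] id (fun v => rfl)
  have h1 : Fintype.card (Quot (zeroRel D w)) ≤ (univ.image (labF s t z)).card := by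
    rw [← card_univ]
    have : (univ : Finset (Quot (zeroRel D w))) ⊆
        (univ.image (labF s t z)).image (fun v => Quot.mk _ (ι v)) := by
      intro q _
      induction q using Quot.ind with
      | _ x =>
        obtain ⟨v, rfl⟩ := hι x
        rw [mem_image]
        exact ⟨labF s t z v, mem_image_of_mem _ (mem_univ _), hl v⟩
    exact (card_le_card this).trans card_image_le
  have h2 : (univ.filter fun e : D.E => w e = 0).card = (univ.filter fun i => z i = true).card := by
    symm
    refine card_bij (fun i _ => ε i) ?_ ?_ ?_
    · intro i hi; simpa [hz] using hi
    · intro i _ j _ h; exact ε.injective h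
    · intro e he
      obtain ⟨i, rfl⟩ := ε.surjective e
      exact ⟨i, by simpa [hz] using he, rfl⟩
  omega

def kS : Fin 6 → Fin 4 := ![0,1,0,2,0,1]
def kT : Fin 6 → Fin 4 := ![1,3,2,3,3,2]
def nS : Fin 6 → Fin 4 := ![1,1,0,0,0,2]
def nT : Fin 6 → Fin 4 := ![2,2,3,3,1,3]

theorem check_k (z0 z1 z2 z3 z4 : Bool) (h1 : ¬ (z0 ∧ z1 ∧ z4)) (h2 : ¬ (z2 ∧ z3 ∧ z4))
    (h3 : ¬ (z0 ∧ z1 ∧ z2 ∧ z3)) :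
    (univ.image (labF kS kT ![z0,z1,z2,z3,z4,false])).card +
      (univ.filter fun i => (![z0,z1,z2,z3,z4,false] : Fin 6 → Bool) i = true).card ≤ 4 := by
  revert z0 z1 z2 z3 z4
  decide +kernel

theorem check_n (z0 z1 z2 z3 : Bool) (h1 : ¬ (z0 ∧ z1)) (h2 : ¬ (z2 ∧ z3)) :
    (univ.image (labF nS nT ![z0,z1,z2,z3,false,false])).card +
      (univ.filter fun i => (![z0,z1,z2,z3,false,false] : Fin 6 → Bool) i = true).card ≤ 4 := by
  revert z0 z1 z2 z3
  decide +kernel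

theorem Joins.symm {G : Multigraph} {e : G.E} {u x : G.V} (h : Joins G e u x) : Joins G e x u :=
  Or.symm h

theorem IsWalk.append {G : Multigraph} {u v x : G.V} {l m : List G.E} (h : IsWalk G u v l)
    (h' : IsWalk G v x m) : IsWalk G u x (l ++ m) := by
  induction h with
  | nil u => exact h'
  | cons h hw ih => exact IsWalk.cons h (ih h')

theorem IsWalk.rev {G : Multigraph} {u v : G.V} {l : List G.E} (h : IsWalk G u v l) :
    IsWalk G v u l.reverse := by
  induction h with
  | nil u => exact IsWalk.nil u
  | cons h hw ih =>
    rw [List.reverse_cons]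
    exact ih.append (IsWalk.cons h.symm (IsWalk.nil _))

def OnL (G : Multigraph) (l : List G.E) (c : G.V) : Prop := ∃ e ∈ l, G.src e = c ∨ G.tgt e = c

theorem walk_split {G : Multigraph} {u v c : G.V} {l : List G.E} (h : IsWalk G u v l)
    (hc : c = u ∨ OnL G l c) : ∃ x y, l = x ++ y ∧ IsWalk G u c x ∧ IsWalk G c v y := by
  induction h with
  | nil u =>
    rcases hc with rfl | ⟨e, he, -⟩
    · exact ⟨[], [], rfl, IsWalk.nil _, IsWalk.nil _⟩
    · simp at he
  | @cons u x v e l h hw ih =>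
    by_cases hcu : c = u
    · subst hcu
      exact ⟨[], e :: l, rfl, IsWalk.nil _, IsWalk.cons h hw⟩
    · have : c = x ∨ OnL G l c := by
        rcases hc with h1 | ⟨f, hf, hfc⟩
        · exact absurd h1 hcu
        · rcases List.mem_cons.1 hf with rfl | hf
          · left
            rcases h with ⟨h1, h2⟩ | ⟨h1, h2⟩ <;> rcases hfc with h3 | h3 <;> grind
          · exact Or.inr ⟨f, hf, hfc⟩
      obtain ⟨a, b, rfl, h1, h2⟩ := ih this
      exact ⟨e :: a, b, rfl, IsWalk.cons h h1, h2⟩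

theorem onL_append {G : Multigraph} {l m : List G.E} {c : G.V} : OnL G (l ++ m) c ↔ OnL G l c ∨ OnL G m c := by
  simp only [OnL, List.mem_append, or_and_right, exists_or]

def US (G : Multigraph) (p : G.V) (S : Finset G.E) : Finset G.V := insert p (S.image G.src ∪ S.image G.tgt)

theorem mem_US {G : Multigraph} {p c : G.V} {S : Finset G.E} :
    c ∈ US G p S ↔ c = p ∨ ∃ e ∈ S, G.src e = c ∨ G.tgt e = c := by
  simp only [US, mem_insert, mem_union, mem_image]
  constructor
  · rintro (h | ⟨e, he, h⟩ | ⟨e, he, h⟩)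
    · exact Or.inl h
    · exact Or.inr ⟨e, he, Or.inl h⟩
    · exact Or.inr ⟨e, he, Or.inr h⟩
  · rintro (h | ⟨e, he, h | h⟩)
    · exact Or.inl h
    · exact Or.inr (Or.inl ⟨e, he, h⟩)
    · exact Or.inr (Or.inr ⟨e, he, h⟩)

theorem rank_walk {G : Multigraph} (U : Finset G.V) (e0 : G.E) (ρ : G.V → ℕ)
    (hρ : ∀ x, x ∉ U → ∃ e y, e ≠ e0 ∧ Joins G e x y ∧ ρ y < ρ x) :
    ∀ k x, ρ x = k → ∃ v l, v ∈ U ∧ IsWalk G x v l ∧ l.Nodup ∧ e0 ∉ l ∧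
      (∀ e ∈ l, G.src e ∉ U ∨ G.tgt e ∉ U) ∧
      ∃ A : Finset G.V, A.card = l.length ∧ (∀ a ∈ A, a ∉ U ∧ OnL G l a ∧ ρ a ≤ k) ∧
        (x ∈ U ∨ x ∈ A) ∧ (∀ c, OnL G l c → c ∈ U ∨ c ∈ A) := by
  intro k
  induction k using Nat.strong_induction_on with
  | _ k ih =>
    intro x hx
    by_cases hxU : x ∈ U
    · exact ⟨x, [], hxU, IsWalk.nil _, by simp, by simp, by simp, ∅, by simp [hxU, OnL]⟩
    · obtain ⟨e, y, hne, hj, hlt⟩ := hρ x hxU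
      obtain ⟨v, l, hv, hw, hnd, he0, hl1, A, hA1, hA2, hA3, hA4⟩ := ih (ρ y) (by omega) y rfl
      have hxe : G.src e = x ∨ G.tgt e = x := by
        rcases hj with h | h
        · exact Or.inl h.1
        · exact Or.inr h.2
      have hxA : x ∉ A := fun h => by have := (hA2 x h).2.2; omega
      have hxl : ¬ OnL G l x := fun h => by
        rcases hA4 x h with h | h
        · exact hxU h
        · exact hxA h
      refine ⟨v, e :: l, hv, IsWalk.cons hj hw, ?_, ?_, ?_, insert x A, ?_, ?_, ?_, ?_⟩
      · rw [List.nodup_cons]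
        exact ⟨fun h => hxl ⟨e, h, hxe⟩, hnd⟩
      · simp [he0, hne.symm]
      · intro f hf
        rcases List.mem_cons.1 hf with rfl | hf
        · rcases hxe with h | h
          · left; rwa [h]
          · right; rwa [h]
        · exact hl1 f hf
      · rw [card_insert_of_notMem hxA, hA1]; rfl
      · intro a ha
        rcases mem_insert.1 ha with rfl | ha
        · exact ⟨hxU, ⟨e, by simp, hxe⟩, by omega⟩
        · obtain ⟨h1, ⟨f, hf, hfa⟩, h3⟩ := hA2 a ha
          exact ⟨h1, ⟨f, by simp [hf], hfa⟩, by omega⟩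
      · right; simp
      · rintro c ⟨f, hf, hfc⟩
        rcases List.mem_cons.1 hf with rfl | hf
        · have : c = x ∨ c = y := by
            rcases hj with ⟨h1, h2⟩ | ⟨h1, h2⟩ <;> rcases hfc with h | h <;> grind
          rcases this with rfl | rfl
          · right; simp
          · rcases hA3 with h | h
            · exact Or.inl h
            · exact Or.inr (mem_insert_of_mem h)
        · rcases hA4 c ⟨f, hf, hfc⟩ with h | h
          · exact Or.inl h
          · exact Or.inr (mem_insert_of_mem h)

theorem ear {G : Multigraph} (hG : G.Connected) (hB : G.Bridgeless) (p : G.V) (S : Finset G.E) (hS : S ≠ univ) :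
    ∃ u v l, u ∈ US G p S ∧ v ∈ US G p S ∧ l ≠ [] ∧ l.Nodup ∧ (∀ e ∈ l, e ∉ S) ∧ IsWalk G u v l ∧
      (US G p (S ∪ l.toFinset)).card + 1 = (US G p S).card + l.length := by
  set U := US G p S with hU
  have hpU : p ∈ U := mem_US.2 (Or.inl rfl)
  have hSU : ∀ e ∈ S, G.src e ∈ U ∧ G.tgt e ∈ U := fun e he =>
    ⟨mem_US.2 (Or.inr ⟨e, he, Or.inl rfl⟩), mem_US.2 (Or.inr ⟨e, he, Or.inr rfl⟩)⟩
  obtain ⟨e0, u, x, he0, huU, hj0⟩ : ∃ e0 u x, e0 ∉ S ∧ u ∈ U ∧ Joins G e0 u x := by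
    by_cases hUu : ∀ x, x ∈ U
    · obtain ⟨e, he⟩ : ∃ e, e ∉ S := by
        by_contra h
        push Not at h
        exact hS (eq_univ_iff_forall.2 h)
      exact ⟨e, _, _, he, hUu (G.src e), Or.inl ⟨rfl, rfl⟩⟩
    · by_contra hcon
      push Not at hcon
      have h := (connOn_iff G univ).1 hG (fun x => decide (x ∈ U)) (by
        intro e _
        by_cases he : e ∈ S
        · simp [hSU e he]
        · by_cases h1 : G.src e ∈ U
          · exact absurd (Or.inl ⟨rfl, rfl⟩) (hcon e _ (G.tgt e) he h1)
          · by_cases h2 : G.tgt e ∈ U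
            · exact absurd (Or.inr ⟨rfl, rfl⟩) (hcon e _ (G.src e) he h2)
            · simp [h1, h2])
      apply hUu
      intro x
      have := h x p
      simpa [hpU] using this
  have hconn : G.ConnOn (univ \ {e0}) := by
    have := hB e0
    unfold Multigraph.IsBridge Multigraph.Disconnects at this
    exact not_not.1 this
  have hreach : ∀ x, ∃ n, ∃ v l, v ∈ U ∧ IsWalk G x v l ∧ e0 ∉ l ∧ l.length = n := by
    let R : G.V → Prop := fun x => ∃ n, ∃ v l, v ∈ U ∧ IsWalk G x v l ∧ e0 ∉ l ∧ l.length = n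
    have hstep : ∀ e a b, e ≠ e0 → Joins G e a b → R b → R a := by
      rintro e a b hne hj ⟨n, v, l, hv, hw, h0, rfl⟩
      exact ⟨_, v, e :: l, hv, IsWalk.cons hj hw, by simp [h0, hne.symm], rfl⟩
    have h := (connOn_iff G _).1 hconn (fun x => decide (R x)) (by
      intro e he
      have hne : e ≠ e0 := by simpa using he
      have : R (G.src e) ↔ R (G.tgt e) :=
        ⟨hstep e _ _ hne (Or.inr ⟨rfl, rfl⟩), hstep e _ _ hne (Or.inl ⟨rfl, rfl⟩)⟩
      simp [this])
    have hp : R p := ⟨0, p, [], hpU, IsWalk.nil _, by simp, rfl⟩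
    intro x
    have := h x p
    have h2 : R x := by simpa [hp] using this
    exact h2
  let ρ : G.V → ℕ := fun x => Nat.find (hreach x)
  have hρ : ∀ x, x ∉ U → ∃ e y, e ≠ e0 ∧ Joins G e x y ∧ ρ y < ρ x := by
    intro x hx
    obtain ⟨v, l, hv, hw, h0, hlen⟩ := Nat.find_spec (hreach x)
    cases hw with
    | nil => exact absurd hv hx
    | @cons _ y _ e l hj hw =>
      simp only [List.mem_cons, not_or] at h0
      refine ⟨e, y, fun h => h0.1 h.symm, hj, ?_⟩
      have : ρ y ≤ l.length := Nat.find_min' (hreach y) ⟨v, l, hv, hw, h0.2, rfl⟩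
      simp only [List.length_cons] at hlen
      simp only [ρ] at this ⊢
      omega
  obtain ⟨v, l, hv, hw, hnd, he0l, hl1, A, hA1, hA2, hA3, hA4⟩ := rank_walk U e0 ρ hρ _ x rfl
  refine ⟨u, v, e0 :: l, huU, hv, by simp, by simp [hnd, he0l], ?_, IsWalk.cons hj0 hw, ?_⟩
  · intro e he
    rcases List.mem_cons.1 he with rfl | he
    · exact he0
    · intro heS
      rcases hl1 e he with h | h
      · exact h (hSU e heS).1
      · exact h (hSU e heS).2
  · have hAU : Disjoint U A := by
      rw [disjoint_left]
      intro a ha ha'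
      exact (hA2 a ha').1 ha
    have : US G p (S ∪ (e0 :: l).toFinset) = U ∪ A := by
      ext c
      rw [mem_US, mem_union]
      constructor
      · rintro (rfl | ⟨e, he, hec⟩)
        · exact Or.inl hpU
        · rcases mem_union.1 he with he | he
          · exact Or.inl (mem_US.2 (Or.inr ⟨e, he, hec⟩))
          · rw [List.mem_toFinset] at he
            rcases List.mem_cons.1 he with rfl | he
            · have : c = u ∨ c = x := by
                rcases hj0 with ⟨h1, h2⟩ | ⟨h1, h2⟩ <;> rcases hec with h | h <;> grind
              rcases this with rfl | rfl
              · exact Or.inl huU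
              · exact hA3
            · exact hA4 c ⟨e, he, hec⟩
      · rintro (h | h)
        · rcases mem_US.1 h with rfl | ⟨e, he, hec⟩
          · exact Or.inl rfl
          · exact Or.inr ⟨e, mem_union_left _ he, hec⟩
        · obtain ⟨-, ⟨e, he, hec⟩, -⟩ := hA2 c h
          exact Or.inr ⟨e, mem_union_right _ (by simp [he]), hec⟩
    rw [this, card_union_of_disjoint hAU, hA1, List.length_cons]
    omega

theorem ear_card {G : Multigraph} {S : Finset G.E} {l : List G.E} (hnd : l.Nodup) (hd : ∀ e ∈ l, e ∉ S) :
    (S ∪ l.toFinset).card = S.card + l.length := by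
  rw [card_union_of_disjoint, List.toFinset_card_of_nodup hnd]
  rw [disjoint_right]
  intro e he
  exact hd e (by simpa using he)

theorem US_univ {n : ℕ} {G : Multigraph} (hG : memG G n (n+2)) (p : G.V) : (US G p univ).card = n := by
  have : US G p univ = univ := by
    rw [eq_univ_iff_forall]
    intro v
    obtain ⟨e, he⟩ := incident hG.2.2 (by have := hG.2.1; omega) v
    exact mem_US.2 (Or.inr ⟨e, mem_univ _, he⟩)
  rw [this, card_univ]
  exact hG.1

theorem ears_le {n : ℕ} {G : Multigraph} (hG : memG G n (n+2)) (hB : G.Bridgeless) (p : G.V) :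
    ∀ r k (S : Finset G.E), Sᶜ.card = r → (US G p S).card + k = S.card + 1 → k ≤ 3 := by
  intro r
  induction r using Nat.strong_induction_on with
  | _ r ih =>
    intro k S hr hk
    by_cases hS : S = univ
    · subst hS
      rw [US_univ hG, card_univ] at hk
      have : Fintype.card G.E = n + 2 := hG.2.1
      omega
    · obtain ⟨u, v, l, hu, hv, hl, hnd, hd, hw, hc⟩ := ear hG.2.2 hB p S hS
      have h1 := ear_card hnd hd
      have h2 : l.length ≠ 0 := by simpa using hl
      have h3 := card_le_univ (S ∪ l.toFinset)
      rw [card_compl] at hr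
      have := ih _ (by rw [card_compl, ← hr]; omega) (k+1) (S ∪ l.toFinset) rfl (by omega)
      omega

theorem theta {n : ℕ} {G : Multigraph} (hG : memG G n (n+2)) (hn : 1 ≤ n) (hB : G.Bridgeless) :
    ∃ (u v u' v' : G.V) (t1 t2 t3 l : List G.E), IsWalk G u v t1 ∧ IsWalk G u v t2 ∧ IsWalk G u v t3 ∧
      IsWalk G u' v' l ∧ l ≠ [] ∧ t3 ≠ [] ∧ ¬ (t1 = [] ∧ t2 = []) ∧
      (∀ e, t1.count e + t2.count e + t3.count e + l.count e = 1) ∧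
      (OnL G t1 u' ∨ OnL G t2 u' ∨ OnL G t3 u') ∧ (OnL G t1 v' ∨ OnL G t2 v' ∨ OnL G t3 v') := by
  obtain ⟨p⟩ : Nonempty G.V := Fintype.card_pos_iff.mp (by have := hG.1; unfold Multigraph.nV at this; omega)
  have hE : Fintype.card G.E = n + 2 := hG.2.1
  have huniv : ∀ S : Finset G.E, ∀ k, (US G p S).card + k = S.card + 1 → k ≠ 3 → S ≠ univ := by
    rintro S k hk h3 rfl
    rw [US_univ hG, card_univ] at hk
    omega
  have c0 : (US G p ∅).card + 0 = (∅ : Finset G.E).card + 1 := by simp [US]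
  obtain ⟨u1, v1, l1, hu1, hv1, hl1, hnd1, hd1, hw1, hc1⟩ := ear hG.2.2 hB p ∅ (huniv _ 0 c0 (by omega))
  have c1 := ear_card hnd1 hd1
  set S1 := ∅ ∪ l1.toFinset with hS1
  have k1 : (US G p S1).card + 1 = S1.card + 1 := by omega
  obtain ⟨u2, v2, l2, hu2, hv2, hl2, hnd2, hd2, hw2, hc2⟩ := ear hG.2.2 hB p S1 (huniv _ 1 k1 (by omega))
  have c2 := ear_card hnd2 hd2
  set S2 := S1 ∪ l2.toFinset with hS2
  have k2 : (US G p S2).card + 2 = S2.card + 1 := by omega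
  obtain ⟨u3, v3, l3, hu3, hv3, hl3, hnd3, hd3, hw3, hc3⟩ := ear hG.2.2 hB p S2 (huniv _ 2 k2 (by omega))
  have c3 := ear_card hnd3 hd3
  set S3 := S2 ∪ l3.toFinset with hS3
  have k3 : (US G p S3).card + 3 = S3.card + 1 := by omega
  have hfull : S3 = univ := by
    by_contra hne
    obtain ⟨u4, v4, l4, hu4, hv4, hl4, hnd4, hd4, hw4, hc4⟩ := ear hG.2.2 hB p S3 hne
    have c4 := ear_card hnd4 hd4
    have := ears_le hG hB p _ 4 _ rfl (by omega : (US G p (S3 ∪ l4.toFinset)).card + 4 = _)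
    omega
  have hm1 : ∀ e, e ∈ S1 ↔ e ∈ l1 := by simp [hS1]
  have hm2 : ∀ e, e ∈ S2 ↔ e ∈ l1 ∨ e ∈ l2 := by simp [hS2, hm1]
  have hm3 : ∀ e, e ∈ l1 ∨ e ∈ l2 ∨ e ∈ l3 := by
    intro e
    have : e ∈ S3 := hfull ▸ mem_univ e
    rw [hS3, mem_union, hm2, List.mem_toFinset] at this
    tauto
  have hcount : ∀ e, l1.count e + l2.count e + l3.count e = 1 := by
    intro e
    have a1 := fun h : e ∈ l2 => (hm1 e).not.1 (hd2 e h)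
    have a2 := fun h : e ∈ l3 => (hm2 e).not.1 (hd3 e h)
    rw [hnd1.count, hnd2.count, hnd3.count]
    have := hm3 e
    by_cases b1 : e ∈ l1 <;> by_cases b2 : e ∈ l2 <;> by_cases b3 : e ∈ l3 <;> simp_all
  have hu1p : u1 = p := by simpa [US] using hu1
  have hv1p : v1 = p := by simpa [US] using hv1
  subst hu1p
  subst hv1p
  have hpl : OnL G l1 v1 := by
    cases hw1 with
    | nil => exact absurd rfl hl1
    | @cons _ _ _ e l h hw =>
      refine ⟨e, by simp, ?_⟩
      rcases h with h | h
      · exact Or.inl h.1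
      · exact Or.inr h.2
  have hon1 : ∀ c, c ∈ US G v1 S1 → OnL G l1 c := by
    intro c hc
    rcases mem_US.1 hc with rfl | ⟨e, he, hec⟩
    · exact hpl
    · exact ⟨e, (hm1 e).1 he, hec⟩
  have hon2 : ∀ c, c ∈ US G v1 S2 → OnL G l1 c ∨ OnL G l2 c := by
    intro c hc
    rcases mem_US.1 hc with rfl | ⟨e, he, hec⟩
    · exact Or.inl hpl
    · rcases (hm2 e).1 he with h | h
      · exact Or.inl ⟨e, h, hec⟩
      · exact Or.inr ⟨e, h, hec⟩
  obtain ⟨x, y, rfl, hx, hy⟩ := walk_split hw1 (Or.inr (hon1 _ hu2))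
  have hv2' := hon1 _ hv2
  rw [onL_append, or_comm, ← onL_append] at hv2'
  obtain ⟨t1, t2, ht, hwt1, hwt2⟩ := walk_split (hy.append hx) (Or.inr hv2')
  have hrev : ∀ c, OnL G t2.reverse c ↔ OnL G t2 c := by intro c; simp [OnL]
  have hsame : ∀ c, OnL G (x ++ y) c ↔ OnL G t1 c ∨ OnL G t2.reverse c := by
    intro c
    rw [hrev, ← onL_append, ← ht, onL_append, or_comm, ← onL_append]
  refine ⟨u2, v2, u3, v3, t1, t2.reverse, l2, l3, hwt1, hwt2.rev, hw2, hw3, hl3, hl2, ?_, ?_, ?_, ?_⟩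
  · rintro ⟨rfl, h2⟩
    have : t2 = [] := by simpa using h2
    subst this
    simp at ht
    exact hl1 (by simp [ht])
  · intro e
    have h1 := hcount e
    have h2 := congrArg (List.count e) ht
    simp only [List.count_append, List.count_reverse] at h1 h2 ⊢
    omega
  · have := hon2 _ hu3
    rw [hsame] at this
    tauto
  · have := hon2 _ hv3
    rw [hsame] at this
    tauto

theorem count_props {α β : Type} [Fintype β] (L : β → List α) (h : ∀ x, ∑ e, (L e).count x = 1) :
    (∀ e, (L e).Nodup) ∧ (∀ e f, e ≠ f → ∀ x, x ∈ L e → x ∉ L f) ∧ (∀ x, ∃ e, x ∈ L e) := by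
  refine ⟨?_, ?_, ?_⟩
  · intro e
    rw [List.nodup_iff_count_le_one]
    intro x
    rw [← h x]
    exact single_le_sum (f := fun e => (L e).count x) (fun _ _ => Nat.zero_le _) (mem_univ e)
  · intro e f hne x he hf
    have h1 : 0 < (L e).count x := List.count_pos_iff.2 he
    have h2 : 0 < (L f).count x := List.count_pos_iff.2 hf
    have h3 : ∑ g ∈ {e, f}, (L g).count x ≤ ∑ g, (L g).count x :=
      sum_le_sum_of_subset (subset_univ _)
    rw [sum_pair hne, h x] at h3
    omega
  · intro x
    by_contra hcon
    push Not at hcon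
    have h1 := h x
    rw [sum_eq_zero (fun e _ => List.count_eq_zero.2 (hcon e))] at h1
    omega

def Qgr : Multigraph where
  V := Fin 4
  E := Fin 6
  src := kS
  tgt := kT

def Ngr : Multigraph where
  V := Fin 4
  E := Fin 6
  src := nS
  tgt := nT

def kE : Fin 6 ≃ {p : Fin 4 × Fin 4 // p.1 < p.2} :=
  Equiv.ofBijective (fun i => (⟨(kS i, kT i), by revert i; decide⟩ : {p : Fin 4 × Fin 4 // p.1 < p.2}))
    (by
      constructor
      · intro i j h
        have h1 := congrArg (fun z => z.1) h
        revert i j; decide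
      · rintro ⟨⟨a, b⟩, h⟩
        have : ∃ i, kS i = a ∧ kT i = b := by revert a b; decide
        obtain ⟨i, rfl, rfl⟩ := this
        exact ⟨i, rfl⟩)

theorem k4_form {n : ℕ} {G : Multigraph} (hG : memG G n (n+2)) {p0 p1 p2 p3 : G.V}
    {x1 x2 y1 y2 tk l : List G.E} (h0 : IsWalk G p0 p1 x1) (h1 : IsWalk G p1 p3 x2)
    (h2 : IsWalk G p0 p2 y1) (h3 : IsWalk G p2 p3 y2) (h4 : IsWalk G p0 p3 tk) (h5 : IsWalk G p1 p2 l)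
    (hl : l ≠ []) (e1 : ¬ (x1 = [] ∧ x2 = [] ∧ tk = [])) (e2 : ¬ (y1 = [] ∧ y2 = [] ∧ tk = []))
    (e3 : ¬ (x1 = [] ∧ x2 = [] ∧ y1 = [] ∧ y2 = []))
    (hc : ∀ e, x1.count e + x2.count e + y1.count e + y2.count e + tk.count e + l.count e = 1) :
    ∃ w : K4.E → ℕ, IsWeakSubdivision G K4 w := by
  let M : Fin 6 → List G.E := ![x1, x2, y1, y2, tk, l]
  let B : Fin 4 → G.V := ![p0, p1, p2, p3]
  let ε : Fin 6 ≃ K4.E := kE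
  let L : K4.E → List G.E := fun e => M (ε.symm e)
  have hLε : ∀ i, L (ε i) = M i := fun i => by simp [L]
  obtain ⟨a1, a2, a3⟩ := count_props L (by
    intro x
    rw [← Equiv.sum_comp ε]
    simp only [hLε, Fin.sum_univ_six]
    exact hc x)
  refine ⟨_, model hG (D := K4) ?_ L B ?_ a1 a2 a3 ?_⟩
  · have : K4.nE = 6 := (Fintype.card_congr ε).symm.trans (by simp)
    have h4 : K4.nV = 4 := Fintype.card_fin 4
    omega
  · intro e
    obtain ⟨i, rfl⟩ := ε.surjective e
    rw [hLε]
    change IsWalk G (B (kS i)) (B (kT i)) (M i)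
    fin_cases i
    · exact h0
    · exact h1
    · exact h2
    · exact h3
    · exact h4
    · exact h5
  · refine quot_upper K4 _ id Function.surjective_id ε kS kT (fun i => rfl) (fun i => rfl)
      ![decide (x1 = []), decide (x2 = []), decide (y1 = []), decide (y2 = []), decide (tk = []), false] ?_ ?_
    · intro i
      simp only [hLε]
      fin_cases i <;> simp [M, hl]
    · apply check_k <;> simp only [decide_eq_true_eq] <;> assumption

theorem n_form {n : ℕ} {G : Multigraph} (hG : memG G n (n+2)) {p0 p1 p2 p3 : G.V}
    {a1 a2 b1 b2 c1 c2 : List G.E} (h0 : IsWalk G p1 p2 a1) (h1 : IsWalk G p1 p2 a2)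
    (h2 : IsWalk G p0 p3 b1) (h3 : IsWalk G p0 p3 b2) (h4 : IsWalk G p0 p1 c1) (h5 : IsWalk G p2 p3 c2)
    (hc1 : c1 ≠ []) (hc2 : c2 ≠ []) (e1 : ¬ (a1 = [] ∧ a2 = [])) (e2 : ¬ (b1 = [] ∧ b2 = []))
    (hc : ∀ e, a1.count e + a2.count e + b1.count e + b2.count e + c1.count e + c2.count e = 1) :
    ∃ w : Fin 6 → ℕ, IsIso G (subdivide Ngr w) ∧ 1 ≤ w 4 ∧ 1 ≤ w 5 ∧ 1 ≤ w 0 + w 1 ∧ 1 ≤ w 2 + w 3 := by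
  let L : Fin 6 → List G.E := ![a1, a2, b1, b2, c1, c2]
  let B : Fin 4 → G.V := ![p0, p1, p2, p3]
  obtain ⟨q1, q2, q3⟩ := count_props L (by
    intro x
    simp only [Fin.sum_univ_six]
    exact hc x)
  have hm : IsWeakSubdivision G Ngr (fun e => (L e).length) := by
    refine model hG (D := Ngr) rfl L B ?_ q1 q2 q3 ?_
    · intro i
      change IsWalk G (B (nS i)) (B (nT i)) (L i)
      change Fin 6 at i
      fin_cases i
      · exact h0
      · exact h1
      · exact h2
      · exact h3
      · exact h4
      · exact h5
    · refine quot_upper Ngr _ id Function.surjective_id (Equiv.refl _) nS nT (fun i => rfl) (fun i => rfl)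
        ![decide (a1 = []), decide (a2 = []), decide (b1 = []), decide (b2 = []), false, false] ?_ ?_
      · intro i
        change _ ↔ (L i).length = 0
        fin_cases i <;> simp [L, hc1, hc2]
      · apply check_n <;> simp only [decide_eq_true_eq] <;> assumption
  refine ⟨fun e => (L e).length, hm.2, ?_, ?_, ?_, ?_⟩
  · exact List.length_pos_iff.2 hc1
  · exact List.length_pos_iff.2 hc2
  · change 1 ≤ a1.length + a2.length
    by_contra h
    exact e1 ⟨List.length_eq_zero_iff.1 (by omega), List.length_eq_zero_iff.1 (by omega)⟩
  · change 1 ≤ b1.length + b2.length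
    by_contra h
    exact e2 ⟨List.length_eq_zero_iff.1 (by omega), List.length_eq_zero_iff.1 (by omega)⟩

def Concl (G : Multigraph) : Prop := (∃ w : K4.E → ℕ, IsWeakSubdivision G K4 w) ∨
  ∃ w : Fin 6 → ℕ, IsIso G (subdivide Ngr w) ∧ 1 ≤ w 4 ∧ 1 ≤ w 5 ∧ 1 ≤ w 0 + w 1 ∧ 1 ≤ w 2 + w 3

theorem caseA {n : ℕ} {G : Multigraph} (hG : memG G n (n+2)) {u v u' v' : G.V} {t1 t2 t3 l : List G.E}
    (w1 : IsWalk G u v t1) (w2 : IsWalk G u v t2) (w3 : IsWalk G u v t3) (wl : IsWalk G u' v' l)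
    (hl : l ≠ []) (h12 : ¬ (t1 = [] ∧ t2 = [])) (h13 : ¬ (t1 = [] ∧ t3 = [])) (h23 : ¬ (t2 = [] ∧ t3 = []))
    (hc : ∀ e, t1.count e + t2.count e + t3.count e + l.count e = 1)
    (hu : u' = u ∨ OnL G t1 u') (hv : v' = u ∨ OnL G t2 v') : Concl G := by
  left
  obtain ⟨x1, x2, rfl, hx1, hx2⟩ := walk_split w1 hu
  obtain ⟨y1, y2, rfl, hy1, hy2⟩ := walk_split w2 hv
  refine k4_form hG hx1 hx2 hy1 hy2 w3 wl hl ?_ ?_ ?_ ?_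
  · rintro ⟨rfl, rfl, rfl⟩; simp at h13
  · rintro ⟨rfl, rfl, rfl⟩; simp at h23
  · rintro ⟨rfl, rfl, rfl, rfl⟩; simp at h12
  · intro e
    have := hc e
    simp only [List.count_append] at this
    omega

theorem onL_end {G : Multigraph} {u v : G.V} {l : List G.E} (h : IsWalk G u v l) : v = u ∨ OnL G l v := by
  induction h with
  | nil u => exact Or.inl rfl
  | @cons u x v e l h hw ih =>
    right
    rcases ih with rfl | ⟨f, hf, h2⟩
    · refine ⟨e, by simp, ?_⟩
      rcases h with h | h
      · exact Or.inr h.2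
      · exact Or.inl h.1
    · exact ⟨f, by simp [hf], h2⟩

theorem caseB' {n : ℕ} {G : Multigraph} (hG : memG G n (n+2)) {u v u' v' : G.V} {x y z t2 t3 l : List G.E}
    (wx : IsWalk G u u' x) (wy : IsWalk G u' v' y) (wz : IsWalk G v' v z)
    (w2 : IsWalk G u v t2) (w3 : IsWalk G u v t3) (wl : IsWalk G u' v' l)
    (hl : l ≠ []) (h12 : ¬ (x ++ y ++ z = [] ∧ t2 = [])) (h13 : ¬ (x ++ y ++ z = [] ∧ t3 = []))
    (h23 : ¬ (t2 = [] ∧ t3 = []))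
    (hc : ∀ e, (x ++ y ++ z).count e + t2.count e + t3.count e + l.count e = 1) : Concl G := by
  by_cases hx : x = []
  · subst hx
    have := walk_nil wx
    subst this
    refine caseA hG (t1 := t2) (t2 := [] ++ y ++ z) w2 ((wx.append wy).append wz) w3 wl hl (by tauto) h23 h13 ?_ (Or.inl rfl) ?_
    · intro e; have := hc e; omega
    · rcases onL_end wy with h | h
      · exact Or.inl h
      · right; simp [onL_append, h]
  · by_cases hz : z = []
    · subst hz
      have := walk_nil wz
      subst this
      refine caseA hG (t1 := x ++ y ++ []) (t2 := t2) ((wx.append wy).append wz) w2 w3 wl hl h12 h13 h23 hc ?_ (onL_end w2)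
      rcases onL_end wx with h | h
      · exact Or.inl h
      · right; simp [onL_append, h]
    · right
      refine n_form hG wy wl w2 w3 wx wz hx hz (by tauto) h23 ?_
      intro e
      have := hc e
      simp only [List.count_append] at this
      omega

theorem caseB {n : ℕ} {G : Multigraph} (hG : memG G n (n+2)) {u v u' v' : G.V} {t1 t2 t3 l : List G.E}
    (w1 : IsWalk G u v t1) (w2 : IsWalk G u v t2) (w3 : IsWalk G u v t3) (wl : IsWalk G u' v' l)
    (hl : l ≠ []) (h12 : ¬ (t1 = [] ∧ t2 = [])) (h13 : ¬ (t1 = [] ∧ t3 = [])) (h23 : ¬ (t2 = [] ∧ t3 = []))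
    (hc : ∀ e, t1.count e + t2.count e + t3.count e + l.count e = 1)
    (hu : OnL G t1 u') (hv : OnL G t1 v') : Concl G := by
  obtain ⟨x, y, rfl, hx, hy⟩ := walk_split w1 (Or.inr hu)
  rcases onL_append.1 hv with h | h
  · obtain ⟨x1, x2, rfl, hx1, hx2⟩ := walk_split hx (Or.inr h)
    refine caseB' hG hx1 hx2 hy w2 w3 wl.rev (by simpa using hl) h12 h13 h23 ?_
    intro e
    simpa using hc e
  · obtain ⟨y1, y2, rfl, hy1, hy2⟩ := walk_split hy (Or.inr h)
    rw [← List.append_assoc] at h12 h13 hc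
    exact caseB' hG hx hy1 hy2 w2 w3 wl hl h12 h13 h23 hc

theorem structure_thm {n : ℕ} {G : Multigraph} (hG : memG G n (n+2)) (hn : 1 ≤ n) (hB : G.Bridgeless) :
    Concl G := by
  obtain ⟨u, v, u', v', t1, t2, t3, l, w1, w2, w3, wl, hl, h3, h12, hc, hu, hv⟩ := theta hG hn hB
  have hc' := fun e => hc e
  rcases hu with hu | hu | hu <;> rcases hv with hv | hv | hv
  · exact caseB hG w1 w2 w3 wl hl (by tauto) (by tauto) (by tauto) (fun e => by have := hc e; omega) hu hv
  · exact caseA hG w1 w2 w3 wl hl (by tauto) (by tauto) (by tauto) (fun e => by have := hc e; omega) (Or.inr hu) (Or.inr hv)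
  · exact caseA hG w1 w3 w2 wl hl (by tauto) (by tauto) (by tauto) (fun e => by have := hc e; omega) (Or.inr hu) (Or.inr hv)
  · exact caseA hG w2 w1 w3 wl hl (by tauto) (by tauto) (by tauto) (fun e => by have := hc e; omega) (Or.inr hu) (Or.inr hv)
  · exact caseB hG w2 w1 w3 wl hl (by tauto) (by tauto) (by tauto) (fun e => by have := hc e; omega) hu hv
  · exact caseA hG w2 w3 w1 wl hl (by tauto) (by tauto) (by tauto) (fun e => by have := hc e; omega) (Or.inr hu) (Or.inr hv)
  · exact caseA hG w3 w1 w2 wl hl (by tauto) (by tauto) (by tauto) (fun e => by have := hc e; omega) (Or.inr hu) (Or.inr hv)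
  · exact caseA hG w3 w2 w1 wl hl (by tauto) (by tauto) (by tauto) (fun e => by have := hc e; omega) (Or.inr hu) (Or.inr hv)
  · exact caseB hG w3 w1 w2 wl hl (by tauto) (by tauto) (by tauto) (fun e => by have := hc e; omega) hu hv

def gr6 (s t : Fin 6 → Fin 4) : Multigraph where
  V := Fin 4
  E := Fin 6
  src := s
  tgt := t

theorem nd_list (s t : Fin 6 → Fin 4) (w : Fin 6 → ℕ) (i : ℕ) (l : List (Finset (Fin 6))) (hl : l.Nodup)
    (h : ∀ T : Finset (Fin 6), (T.card = i ∧ ∀ χ : Fin 4 → Bool, (∀ e, e ∉ T → χ (s e) = χ (t e)) → ∀ u, χ u = χ 0) ↔ T ∈ l) :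
    nd (subdivide (gr6 s t) w) i = (l.map fun T => ∏ e ∈ T, w e).sum := by
  refine (nd_sub (gr6 s t) w i).trans ?_
  rw [← List.sum_toFinset _ hl]
  refine sum_congr ?_ (fun _ _ => rfl)
  ext T
  rw [mem_filter]
  refine Iff.trans ?_ ((h T).trans List.mem_toFinset.symm)
  rw [connOn_iff]
  simp only [mem_univ, true_and]
  refine and_congr_right fun _ => forall_congr' fun χ => ?_
  constructor
  · intro H h1 u
    exact H (fun e he => h1 e (mem_sdiff.1 he).2) u (0 : Fin 4)
  · intro H h1 u v
    have := H (fun e he => h1 e (mem_sdiff.2 ⟨mem_univ _, he⟩))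
    rw [this u, this v]

theorem ndN2 (w : Fin 6 → ℕ) : nd (subdivide (gr6 nS nT) w) 2 =
    w 0 * w 1 + w 2 * w 3 + (w 0 + w 1) * (w 2 + w 3) + (w 4 + w 5) * (w 0 + w 1 + w 2 + w 3) := by
  rw [nd_list nS nT w 2 [{0,1},{0,2},{0,3},{0,4},{0,5},{1,2},{1,3},{1,4},{1,5},{2,3},{2,4},{2,5},{3,4},{3,5}]
    (by decide) (by decide +kernel)]
  simp
  ring

theorem ndN3 (w : Fin 6 → ℕ) : nd (subdivide (gr6 nS nT) w) 3 =
    (w 4 + w 5) * (w 0 + w 1) * (w 2 + w 3) + w 0 * w 1 * (w 2 + w 3) + w 2 * w 3 * (w 0 + w 1) := by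
  rw [nd_list nS nT w 3 [{0,2,4},{0,2,5},{0,3,4},{0,3,5},{1,2,4},{1,2,5},{1,3,4},{1,3,5},
    {0,1,2},{0,1,3},{0,2,3},{1,2,3}]
    (by decide) (by decide +kernel)]
  simp
  ring

theorem ndQ2 (w : Fin 6 → ℕ) : nd (subdivide (gr6 kS kT) w) 2 =
    w 0 * w 1 + w 0 * w 2 + w 0 * w 3 + w 1 * w 2 + w 1 * w 3 + w 2 * w 3 +
      (w 4 + w 5) * (w 0 + w 1 + w 2 + w 3) + w 4 * w 5 := by
  rw [nd_list kS kT w 2 [{0,1},{0,2},{0,3},{0,4},{0,5},{1,2},{1,3},{1,4},{1,5},{2,3},{2,4},{2,5},{3,4},{3,5},{4,5}]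
    (by decide) (by decide +kernel)]
  simp
  ring

theorem ndQ3 (w : Fin 6 → ℕ) : nd (subdivide (gr6 kS kT) w) 3 =
    w 4 * (w 0 * w 1 + w 0 * w 3 + w 1 * w 2 + w 2 * w 3) +
    w 5 * (w 0 * w 2 + w 0 * w 3 + w 1 * w 2 + w 1 * w 3) +
    w 4 * w 5 * (w 0 + w 1 + w 2 + w 3) +
    w 0 * w 1 * w 2 + w 0 * w 1 * w 3 + w 0 * w 2 * w 3 + w 1 * w 2 * w 3 := by
  rw [nd_list kS kT w 3 [{4,0,1},{4,0,3},{4,1,2},{4,2,3},{5,0,2},{5,0,3},{5,1,2},{5,1,3},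
    {4,5,0},{4,5,1},{4,5,2},{4,5,3},{0,1,2},{0,1,3},{0,2,3},{1,2,3}]
    (by decide) (by decide +kernel)]
  simp
  ring

theorem Q_mem {n : ℕ} (w : Fin 6 → ℕ) (hs : ∑ i, w i = n + 2) (h0 : 1 ≤ w 0) (h3 : 1 ≤ w 3) (h4 : 1 ≤ w 4)
    (h5 : 1 ≤ w 5) : memG (subdivide (gr6 kS kT) w) n (n+2) := by
  have hQ : (gr6 kS kT).Connected := by
    refine (connOn_iff _ _).2 ?_
    intro χ hχ
    have key : ∀ χ : Fin 4 → Bool, (∀ e, χ (kS e) = χ (kT e)) → ∀ u v, χ u = χ v := by decide +kernel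
    exact key χ (fun e => hχ e (mem_univ e))
  have hE : (subdivide (gr6 kS kT) w).nE = n + 2 := (sub_nE (gr6 kS kT) w).trans hs
  refine ⟨?_, hE, ?_⟩
  · have h := sub_nV (gr6 kS kT) w
    have l := quot_lower (gr6 kS kT) w hQ (by decide)
    have u := quot_upper (gr6 kS kT) w id Function.surjective_id (Equiv.refl _) kS kT (fun i => rfl) (fun i => rfl)
      ![false, decide (w 1 = 0), decide (w 2 = 0), false, false, false] (by
        intro i
        change _ ↔ w i = 0
        fin_cases i <;> simp <;> omega) (check_k _ _ _ _ _ (by simp) (by simp) (by simp))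
    have h6 : (gr6 kS kT).nE = 6 := rfl
    have h7 : (gr6 kS kT).nV = 4 := rfl
    have h8 : ∑ e : (gr6 kS kT).E, w e = n + 2 := hs
    omega
  · refine (sub_conn_iff (gr6 kS kT) w ∅ univ (fun x => ⟨fun _ => by simp, fun _ => mem_univ (α := (subdivide (gr6 kS kT) w).E) x⟩)).2 ⟨by simp, ?_⟩
    rw [image_empty, sdiff_empty]
    exact hQ

theorem half_split (a b : ℕ) : ∃ x y, x + y = a + b ∧ y ≤ x ∧ x ≤ y + 1 ∧ a * b ≤ x * y := by
  refine ⟨(a + b + 1) / 2, (a + b) / 2, by omega, by omega, by omega, ?_⟩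
  obtain ⟨k, hk⟩ := Nat.even_or_odd' (a + b)
  rcases hk with hk | hk
  · have h1 : (a + b + 1) / 2 = k := by omega
    have h2 : (a + b) / 2 = k := by omega
    rw [h1, h2]
    zify at *
    nlinarith [sq_nonneg ((a : ℤ) - b)]
  · have h1 : (a + b + 1) / 2 = k + 1 := by omega
    have h2 : (a + b) / 2 = k := by omega
    rw [h1, h2]
    rcases Nat.lt_or_ge k a with h | h
    · obtain ⟨d, rfl⟩ : ∃ d, a = k + 1 + d := ⟨a - k - 1, by omega⟩
      obtain rfl : k = b + d := by omega
      nlinarith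
    · obtain ⟨d, rfl⟩ : ∃ d, k = a + d := ⟨k - a, by omega⟩
      obtain rfl : b = a + d + 1 + d := by omega
      nlinarith

theorem cross_le (x y z t : ℕ) (h1 : y ≤ x) (h2 : x ≤ y + 1) (h3 : t ≤ z) (h4 : z ≤ t + 1) :
    x * t + y * z ≤ x * y + z * t := by
  rcases Nat.le_total x z with h | h
  · rcases Nat.lt_or_ge t y with h5 | h5
    · obtain rfl : x = z := by omega
      nlinarith
    · zify at *
      nlinarith [mul_nonneg (sub_nonneg.2 h) (sub_nonneg.2 h5)]
  · rcases Nat.lt_or_ge y t with h5 | h5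
    · obtain rfl : x = z := by omega
      nlinarith
    · zify at *
      nlinarith [mul_nonneg (sub_nonneg.2 h) (sub_nonneg.2 h5)]

theorem improveN {n : ℕ} {G : Multigraph} (hG : memG G n (n+2)) (w : Fin 6 → ℕ)
    (hi : IsIso G (subdivide Ngr w)) (h4 : 1 ≤ w 4) (h5 : 1 ≤ w 5) (h01 : 1 ≤ w 0 + w 1) (h23 : 1 ≤ w 2 + w 3) :
    ∃ H, memG H n (n+2) ∧ nd G 2 < nd H 2 ∧ nd G 3 < nd H 3 := by
  have hi' : IsIso G (subdivide (gr6 nS nT) w) := hi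
  have hs : ∑ i, w i = n + 2 := by
    have e1 : (subdivide (gr6 nS nT) w).nE = n + 2 := by
      rw [← hG.2.1]
      obtain ⟨f⟩ := hi'
      exact (Fintype.card_congr f.eMap).symm
    exact (sub_nE (gr6 nS nT) w).symm.trans e1
  rw [nd_iso hi' 2, nd_iso hi' 3, ndN2, ndN3]
  rw [Fin.sum_univ_six] at hs
  generalize w 0 = a1 at *
  generalize w 1 = a2 at *
  generalize w 2 = b1 at *
  generalize w 3 = b2 at *
  generalize w 4 = c1 at *
  generalize w 5 = c2 at *
  obtain ⟨x, y, hx, hxy, hyx, hxm⟩ := half_split a1 a2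
  obtain ⟨z, t, hz, hzt, htz, hzm⟩ := half_split b1 b2
  obtain ⟨c, rfl⟩ : ∃ c, c1 = c + 1 := ⟨c1 - 1, by omega⟩
  refine ⟨subdivide (gr6 kS kT) ![x, t, y, z, c + c2, 1], Q_mem _ ?_ ?_ ?_ ?_ ?_, ?_, ?_⟩
  · rw [Fin.sum_univ_six]
    change x + t + y + z + (c + c2) + 1 = n + 2
    omega
  · change 1 ≤ x; omega
  · change 1 ≤ z; omega
  · change 1 ≤ c + c2; omega
  · change 1 ≤ 1; omega
  · rw [ndQ2]
    change _ < x * t + x * y + x * z + t * y + t * z + y * z + (c + c2 + 1) * (x + t + y + z) + (c + c2) * 1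
    have : a1 + a2 + b1 + b2 = x + y + z + t := by omega
    rw [this, ← hx, ← hz]
    nlinarith
  · rw [ndQ3]
    change _ < (c + c2) * (x * t + x * z + t * y + y * z) + 1 * (x * y + x * z + t * y + t * z) +
      (c + c2) * 1 * (x + t + y + z) + x * t * y + x * t * z + x * y * z + t * y * z
    rw [← hx, ← hz]
    have m1 := Nat.mul_le_mul_right (z + t) hxm
    have m2 := Nat.mul_le_mul_right (x + y) hzm
    have m3 : 1 ≤ (c + c2) * (x + t + y + z) := Nat.mul_pos (by omega) (by omega)
    have m4 : x * t + y * z ≤ x * y + z * t := cross_le x y z t hxy hyx hzt htz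
    nlinarith

theorem improve {n : ℕ} (hn : 1 ≤ n) {G : Multigraph} (hG : memG G n (n+2))
    (h : ¬ G.Bridgeless ∨ ¬ ∃ w : K4.E → ℕ, IsWeakSubdivision G K4 w) :
    ∃ H, memG H n (n+2) ∧ nd G 2 < nd H 2 ∧ nd G 3 < nd H 3 := by
  by_cases hB : G.Bridgeless
  · rcases structure_thm hG hn hB with h1 | ⟨w, hi, h4, h5, h01, h23⟩
    · tauto
    · exact improveN hG w hi h4 h5 h01 h23
  · exact bridge_improve hn hG hB

theorem nd_le_choose {n : ℕ} {G : Multigraph} (hG : memG G n (n+2)) (i : ℕ) : nd G i + G.d i = (n+2).choose i := by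
  rw [nd_add_d, hG.2.1]

theorem improve_bl {n : ℕ} (hn : 1 ≤ n) : ∀ (r : ℕ) (G : Multigraph), G.d 2 = r → memG G n (n+2) →
    (¬ G.Bridgeless ∨ ¬ ∃ w : K4.E → ℕ, IsWeakSubdivision G K4 w) →
    ∃ H, memG H n (n+2) ∧ H.Bridgeless ∧ nd G 2 < nd H 2 ∧ nd G 3 < nd H 3 := by
  intro r
  induction r using Nat.strong_induction_on with
  | _ r ih =>
    intro G hr hG h
    obtain ⟨H, hH, h2, h3⟩ := improve hn hG h
    by_cases hB : H.Bridgeless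
    · exact ⟨H, hH, hB, h2, h3⟩
    · have g := nd_le_choose hG 2
      have g' := nd_le_choose hH 2
      obtain ⟨K, hK, hKB, k2, k3⟩ := ih _ (by omega) H rfl hH (Or.inl hB)
      exact ⟨K, hK, hKB, by omega, by omega⟩

theorem p_optimal_k2_is_K4_subdivision (n : ℕ) (hn : 1 ≤ n) :
    (∀ G : Multigraph, memG G n (n + 2) →
      (¬ ∃ w : K4.E → ℕ, IsWeakSubdivision G K4 w) →
      ∃ H : Multigraph, memG H n (n + 2) ∧ H.Bridgeless ∧
        H.d 2 < G.d 2 ∧ H.d 3 < G.d 3) ∧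
    (∀ p : ℝ, 0 < p → p < 1 → ∀ G : Multigraph, pOptimal G n (n + 2) p →
      ∃ w : K4.E → ℕ, IsWeakSubdivision G K4 w) := by
  constructor
  · intro G hG h
    obtain ⟨H, hH, hB, h2, h3⟩ := improve_bl hn _ G rfl hG (Or.inr h)
    have a1 := nd_le_choose hG 2
    have a2 := nd_le_choose hG 3
    have b1 := nd_le_choose hH 2
    have b2 := nd_le_choose hH 3
    exact ⟨H, hH, hB, by omega, by omega⟩
  · intro p h0 h1 G hG
    by_contra h
    obtain ⟨H, hH, hB, h2, h3⟩ := improve_bl hn _ G rfl hG.1 (Or.inr h)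
    have := rel_lt hn hG.1 hH hB h2 h3 h0 h1
    have := hG.2 H hH
    linarith
end
end
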